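/- The colored immaculate basis of NSym_A is dual to the colored dual immaculate basis of QSym_A: for all sentences I and J, ⟨𝔖_I, 𝔖*_J⟩ = δ_{I,J}. -/

import Mathlib

open scoped BigOperators

namespace ColoredImm

variable {A : Type*}

/-- A *weak sentence* over the alphabet `A`: a finite list of words (words may be empty). -/
abbrev Sentence (A : Type*) := List (List A)

/-- A genuine *sentence*: all of its words are nonempty. -/
def IsSentence (I : Sentence A) : Prop := ∀ w ∈ I, w ≠ []

/-- The size `|I|` of a sentence: its total number of letters. -/
def size (I : Sentence A) : ℕ := (I.map List.length).sum

/-- The word lengths `wℓ(I)` of a sentence. -/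
def wl (I : Sentence A) : List ℕ := I.map List.length

/-- The flattening of a weak sentence: delete all empty words. -/
def flattenWS (I : Sentence A) : Sentence A := I.filter (fun w => !w.isEmpty)

/-- `Refines J I` means `J ⪯ I`: the sentence `I` can be obtained by concatenating
some adjacent words of `J` (so `J` is a refinement of `I`, and `I` a coarsening of `J`). -/
def Refines (J I : Sentence A) : Prop :=
  ∃ P : List (Sentence A), (∀ p ∈ P, p ≠ []) ∧ P.flatten = J ∧ P.map List.flatten = I

/-! ### Fillings and colored immaculate tableaux -/

/-- An integer filling of a diagram, recorded row by row. -/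
abbrev Filling := List (List ℕ)

/-- The entry of a filling at box `b = (row, column)` (0-indexed), with default `0`. -/
def entryAt (f : Filling) (b : ℕ × ℕ) : ℕ := (f.getD b.1 []).getD b.2 0

/-- `IsCIT I f`: `f` is a colored immaculate tableau of shape `I`; that is, `f` has the
same shape as the colored composition diagram of `I`, its entries are positive integers
weakly increasing left to right along each row, and the entries in the first column are
strictly increasing from top to bottom. -/
def IsCIT (I : Sentence A) (f : Filling) : Prop :=
  f.map List.length = I.map List.length ∧
  (∀ row ∈ f, row.Chain' (· ≤ ·)) ∧
  (f.filterMap List.head?).Chain' (· < ·) ∧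
  (∀ x ∈ f.flatten, 1 ≤ x)

/-- The colors (letters of `w`) of the boxes of one row whose entry (in `row`) is `v`,
read from left to right. -/
def rowWith (w : List A) (row : List ℕ) (v : ℕ) : List A :=
  ((w.zip row).filter (fun p => p.2 == v)).map Prod.fst

/-- The word of the type of a tableau at value `v`: the colors of all boxes with entry `v`,
read left to right, from the bottom row up to the top row. -/
def typeWord (I : Sentence A) (f : Filling) (v : ℕ) : List A :=
  (((I.zip f).reverse).map (fun p => rowWith p.1 p.2 v)).flatten

/-- `HasType I f B` : the tableau `f` (of shape `I`) has type the weak sentence `B`,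
i.e. for every positive integer `v`, the colors of the boxes of `f` containing `v`
(read left to right, bottom to top) form the `v`-th word of `B`. -/
def HasType (I : Sentence A) (f : Filling) (B : Sentence A) : Prop :=
  ∀ v, 1 ≤ v → typeWord I f v = B.getD (v - 1) []

/-- `K_{J,B}`: the number of colored immaculate tableaux of shape `J` and type `B`. -/
noncomputable def KJB (J B : Sentence A) : ℕ :=
  Set.ncard {f : Filling | IsCIT J f ∧ HasType J f B}

/-! ### Standardization -/

/-- The list of boxes of a filling. -/
def boxes (f : Filling) : List (ℕ × ℕ) :=
  ((List.range f.length).map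
    (fun r => (List.range (f.getD r []).length).map (fun j => (r, j)))).flatten

/-- `beforeB f b b'`: box `b` comes strictly before box `b'` in the type-reading order of `f`
(smaller entries first; among equal entries, lower rows first, and within a row left to right). -/
def beforeB (f : Filling) (b b' : ℕ × ℕ) : Bool :=
  entryAt f b < entryAt f b' ||
    (entryAt f b == entryAt f b' && (b'.1 < b.1 || (b.1 == b'.1 && b.2 < b'.2)))

/-- The standardization of a filling: each box is renumbered (starting from `1`)
according to its position in the type-reading order. -/
def stdFill (f : Filling) : Filling :=
  (List.range f.length).map (fun r =>
    (List.range (f.getD r []).length).map (fun j =>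
      1 + ((boxes f).filter (fun b' => beforeB f b' (r, j))).length))

/-- The number of boxes of a filling. -/
def nBoxes (f : Filling) : ℕ := f.flatten.length

/-- A filling of `n` boxes is standard when its entries are exactly `1, …, n`,
each appearing once. -/
def IsStandardF (f : Filling) : Prop := f.flatten.Perm (List.range' 1 (nBoxes f))

/-! ### Descents and the colored descent composition -/

/-- The (0-indexed) row containing the value `v` in a standard filling. -/
def rowOf (f : Filling) (v : ℕ) : ℕ := f.findIdx (fun row => row.contains v)

/-- The sorted list of descents of a standard filling: those `i` with `1 ≤ i ≤ n-1`
such that `i+1` lies in a strictly lower row than `i`. -/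
def descList (f : Filling) : List ℕ :=
  (List.range' 1 (nBoxes f - 1)).filter (fun i => decide (rowOf f i < rowOf f (i + 1)))

/-- The composition of `n` associated to a set of split positions `d_1 < … < d_k`:
`(d_1, d_2 - d_1, …, n - d_k)`. -/
def compOf (ds : List ℕ) (n : ℕ) : List ℕ :=
  List.zipWith (fun a b => b - a) (0 :: ds) (ds ++ [n])

/-- Split a word into a sentence according to a composition. -/
def splitByComp : List A → List ℕ → List (List A)
  | _, [] => []
  | w, a :: rest => w.take a :: splitByComp (w.drop a) rest

/-- The color of the box containing the value `v` in a standard filling of shape `I`. -/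
def colorOf [Inhabited A] (I : Sentence A) (f : Filling) (v : ℕ) : A :=
  (I.getD (rowOf f v) []).getD ((f.getD (rowOf f v) []).findIdx (fun x => x == v)) default

/-- The maximal word of the colored descent composition of a standard filling of shape `I`:
the colors of its boxes read in the order of their integer entries. -/
def readWord [Inhabited A] (I : Sentence A) (f : Filling) : List A :=
  (List.range (nBoxes f)).map (fun i => colorOf I f (i + 1))

/-- The colored descent composition `co_A(U)` of a standard colored immaculate tableau:
read the colors of the boxes in the order of their entries, starting a new word
immediately after each descent. -/
def coA [Inhabited A] (I : Sentence A) (f : Filling) : Sentence A :=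
  if nBoxes f = 0 then [] else splitByComp (readWord I f) (compOf (descList f) (nBoxes f))

/-- `L_{J,C}`: the number of standard colored immaculate tableaux of shape `J`
with colored descent composition `C`. -/
noncomputable def LJC [Inhabited A] (J C : Sentence A) : ℕ :=
  Set.ncard {f : Filling | IsCIT J f ∧ IsStandardF f ∧ coA J f = C}

/-! ### The colored quasisymmetric functions `QSym_A` -/

/-- A (normal form of a) monomial in the partially commutative variables `x_{a,i}`:
a pair consisting of the list of words `(w_1, …, w_m)` and the list of (strictly
increasing, positive) second indices `(j_1 < … < j_m)`, representing
`x_{w_1,j_1} ⋯ x_{w_m,j_m}`. -/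
abbrev Mono (A : Type*) := List (List A) × List ℕ

/-- A colored quasisymmetric "series": a formal linear combination of monomials,
recorded by its coefficient function.  `QSym_A` itself is the span of the colored
monomial functions `MQ I` inside this space. -/
abbrev QSymA (A : Type*) := Mono A → ℚ

/-- Validity of a monomial normal form: words and indices match up, the indices are
strictly increasing positive integers, and all words are nonempty. -/
def ValidMono (m : Mono A) : Prop :=
  m.1.length = m.2.length ∧ m.2.Chain' (· < ·) ∧ (∀ j ∈ m.2, 1 ≤ j) ∧ ∀ w ∈ m.1, w ≠ []

open Classical in
/-- The colored monomial quasisymmetric function `M_I`: the sum of all monomials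
`x_{w_1,j_1} ⋯ x_{w_m,j_m}` with `j_1 < … < j_m`, where `I = (w_1, …, w_m)`. -/
noncomputable def MQ (I : Sentence A) : QSymA A := fun m =>
  if m.1 = I ∧ ValidMono m then 1 else 0

/-- The largest entry of a filling. -/
def maxEntry (f : Filling) : ℕ := f.flatten.foldr max 0

/-- The monomial `x_T` of a colored immaculate tableau `T = f` of shape `I`:
for `T` of type `B = (u_1, …, u_j)` it is `x_{u_1,1} x_{u_2,2} ⋯ x_{u_j,j}`
(empty words are skipped). -/
def monoOf (I : Sentence A) (f : Filling) : Mono A :=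
  let vs := ((List.range (maxEntry f)).map (· + 1)).filter (fun v => !(typeWord I f v).isEmpty)
  (vs.map (typeWord I f), vs)

/-- The colored dual immaculate function `𝔖*_J = Σ_T x_T`, the sum of the monomials of all
colored immaculate tableaux `T` of shape `J` (its coefficient at a monomial `m` is the
number of such tableaux with `x_T = m`). -/
noncomputable def dualImm (J : Sentence A) : QSymA A := fun m =>
  (Set.ncard {f : Filling | IsCIT J f ∧ monoOf J f = m} : ℚ)

/-- The colored fundamental quasisymmetric function `F_I = Σ_{J ⪯ I} M_J`. -/
noncomputable def FQ (I : Sentence A) : QSymA A :=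
  ∑ᶠ J ∈ {J : Sentence A | Refines J I}, MQ J

/-! ### The colored immaculate descent graph -/

/-- Edges of the colored immaculate descent graph: a directed edge from `I` to `J` (`J ≠ I`)
whenever some standard colored immaculate tableau of shape `I` has colored descent
composition `J`. -/
def IsEdge [Inhabited A] (I J : Sentence A) : Prop := J ≠ I ∧ LJC I J ≠ 0

/-- Directed paths from `I` to `K` in the colored immaculate descent graph, recorded by
their (nonempty) lists of successive vertices; the path `[I]` is the empty path at `I`. -/
def PathsFromTo [Inhabited A] (I K : Sentence A) : Set (List (Sentence A)) :=
  {p | p.head? = some I ∧ p.getLast? = some K ∧ p.Chain' IsEdge}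

/-- The signed weight `(-1)^{ℓ(𝒫)} prod(𝒫)` of a directed path `𝒫`:
`ℓ(𝒫)` is its number of edges and `prod(𝒫)` the product of its edge weights `L_{I,J}`. -/
noncomputable def pathWeight [Inhabited A] (p : List (Sentence A)) : ℚ :=
  ((-1 : ℚ)) ^ (p.length - 1) * ((p.zip p.tail).map (fun e => (LJC e.1 e.2 : ℚ))).prod

/-- `L⁻¹_{I,K} = Σ_𝒫 (-1)^{ℓ(𝒫)} prod(𝒫)`, summed over all directed paths `𝒫`
from `I` to `K` in the colored immaculate descent graph. -/
noncomputable def Linv [Inhabited A] (I K : Sentence A) : ℚ :=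
  ∑ᶠ p ∈ PathsFromTo I K, pathWeight p

/-! ### The colored noncommutative symmetric functions `NSym_A` -/

/-- A formal series over the complete homogeneous basis `{H_I}` of `NSym_A`, recorded by its
coefficient function on (weak) sentences.  `NSym_A` itself consists of the finitely
supported elements supported on genuine sentences; see `InNSym`. -/
abbrev NSymA (A : Type*) := Sentence A → ℚ

/-- Membership in `NSym_A` proper: finitely supported, and supported on genuine sentences. -/
def InNSym (f : NSymA A) : Prop :=
  (Function.support f).Finite ∧ ∀ I, f I ≠ 0 → IsSentence I

open Classical in
/-- The colored complete homogeneous noncommutative symmetric function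
`H_I = H_{w_1} ⋯ H_{w_k}`. -/
noncomputable def Hd (I : Sentence A) : NSymA A := fun J => if J = I then 1 else 0

/-- `H_w` for a single word `w`, with `H_∅ = 1`. -/
noncomputable def Hw (w : List A) : NSymA A := if w.isEmpty then Hd [] else Hd [w]

/-- Multiplication in `NSym_A` (the concatenation product, extended to series):
`H_I · H_J = H_{I ⬝ J}`. -/
def mulN (f g : NSymA A) : NSymA A := fun I =>
  ∑ j ∈ Finset.range (I.length + 1), f (I.take j) * g (I.drop j)

/-- The duality pairing `⟨·,·⟩ : NSym_A × QSym_A → ℚ`, determined by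
`⟨H_I, M_J⟩ = δ_{I,J}`: the `M_I`-coefficient of a quasisymmetric function is its
coefficient on the monomial `x_{w_1,1} x_{w_2,2} ⋯ x_{w_k,k}`. -/
noncomputable def pairNQ (G : NSymA A) (F : QSymA A) : ℚ :=
  ∑ᶠ I ∈ {I : Sentence A | IsSentence I}, G I * F (I, List.range' 1 I.length)

/-- All ways of splitting each word of a list of words into a prefix and a suffix. -/
def splitsOf : List (List A) → List (List (List A) × List (List A))
  | [] => [([], [])]
  | w :: ws =>
      (((splitsOf ws).map (fun p =>
        (List.range (w.length + 1)).map (fun t => (w.take t :: p.1, w.drop t :: p.2))))).flatten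

/-- Restriction of a candidate monomial: keep only the nonempty words together with
their indices. -/
def restrictMono (ws : List (List A)) (js : List ℕ) : Mono A :=
  let ps := (ws.zip js).filter (fun p => !p.1.isEmpty)
  (ps.map Prod.fst, ps.map Prod.snd)

/-- The product of colored quasisymmetric series: the coefficient of a monomial in `F·G`
is the sum, over all ways of writing each of its words as a concatenation of a word of a
monomial of `F` (on the left) and a word of a monomial of `G` (on the right), of the
products of the corresponding coefficients. -/
def mulQ (F G : QSymA A) : QSymA A := fun m =>
  ((splitsOf m.1).map (fun p => F (restrictMono p.1 m.2) * G (restrictMono p.2 m.2))).sum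

/-- The right perp operator `M^⊸` of `M ∈ QSym_A`, the linear operator on `NSym_A`
determined by `⟨M^⊸(H), G⟩ = ⟨H, G·M⟩`; explicitly, for the dual bases `{M_I}` and `{H_I}`,
`M^⊸(H) = Σ_I ⟨H, M_I · M⟩ H_I`. -/
noncomputable def rperp (M : QSymA A) (H : NSymA A) : NSymA A :=
  ∑ᶠ I ∈ {I : Sentence A | IsSentence I}, pairNQ H (mulQ (MQ I) M) • Hd I

/-- The colored noncommutative Bernstein operator
`𝔹_v = Σ_u Σ_{Q : w(Q^r) = u} (-1)^{ℓ(Q)} H_{v·u} · (Σ_{S ⪰ Q} M_S^⊸)`,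
where `Q` runs over all sentences, `u = w(Q^r)` is the concatenation of the words of `Q`
in reverse order, and `S` runs over all coarsenings of `Q`. -/
noncomputable def Bern (v : List A) (f : NSymA A) : NSymA A :=
  ∑ᶠ Q ∈ {Q : Sentence A | IsSentence Q},
    ((-1 : ℚ)) ^ Q.length •
      mulN (Hw (v ++ Q.reverse.flatten))
        (∑ᶠ S ∈ {S : Sentence A | Refines Q S}, rperp (MQ S) f)

/-- The colored immaculate function `𝔖_J = 𝔹_{v_1} 𝔹_{v_2} ⋯ 𝔹_{v_h}(1)`. -/
noncomputable def ImmS (J : Sentence A) : NSymA A := J.foldr Bern (Hd [])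

/-- The colored ribbon function `R_I = Σ_{J ⪰ I} (-1)^{ℓ(J) - ℓ(I)} H_J`. -/
noncomputable def Rib (I : Sentence A) : NSymA A :=
  ∑ᶠ J ∈ {J : Sentence A | Refines I J}, ((-1 : ℚ)) ^ (I.length - J.length) • Hd J

/-- The Pieri relation `J ⊂_w K` for a sentence `J = (v_1, …, v_h)` and a word `w`:
`K = (u_1, …, u_g)` with `h ≤ g ≤ h+1` (setting `v_{h+1} = ∅`) and `u_j = v_j · q_j`
for words `q_j` (possibly empty) whose reversed concatenation `q_g ⋯ q_1` equals `w`. -/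
def PieriRel (J : Sentence A) (w : List A) (K : Sentence A) : Prop :=
  J.length ≤ K.length ∧ K.length ≤ J.length + 1 ∧
  ∃ q : List (List A), q.length = K.length ∧ q.reverse.flatten = w ∧
    ∀ j < K.length, K.getD j [] = J.getD j [] ++ q.getD j []

/-- Right containment of a weak sentence `K` in `J`: same length, and each word of `K` is a
suffix of the corresponding word of `J`. -/
def RightContained (K J : Sentence A) : Prop :=
  K.length = J.length ∧ ∀ i < J.length, (K.getD i []).IsSuffix (J.getD i [])

/-- The weak sentence `J/_R K`: remove each word of `K` from the right end of the
corresponding word of `J`. -/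
def rightQuot (J K : Sentence A) : Sentence A :=
  List.zipWith (fun v u => v.take (v.length - u.length)) J K

/-- Left containment `J ⊆_L I`: `ℓ(J) ≤ ℓ(I)` and each word of `J` is a prefix of the
corresponding word of `I`. -/
def LeftContained (J I : Sentence A) : Prop :=
  J.length ≤ I.length ∧ ∀ i < J.length, (J.getD i []).IsPrefix (I.getD i [])

/-- A skew colored immaculate tableau of shape `I/J`: a filling of the active boxes
(the `i`-th row keeps the last `|w_i| - |v_i|` boxes) with positive integers, rows weakly
increasing left to right, and the entries in the (active part of the) first column of `I`
strictly increasing top to bottom. -/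
def IsSkewCIT (I J : Sentence A) (f : Filling) : Prop :=
  f.map List.length =
    (List.range I.length).map (fun i => (I.getD i []).length - (J.getD i []).length) ∧
  (∀ row ∈ f, row.Chain' (· ≤ ·)) ∧
  ((List.range I.length).filterMap
    (fun i => if (J.getD i []).length = 0 then (f.getD i []).head? else none)).Chain' (· < ·) ∧
  (∀ x ∈ f.flatten, 1 ≤ x)

/-- The word of the type of a skew tableau at value `v`: the colors of the active boxes with
entry `v`, read left to right, bottom to top. -/
def skewTypeWord (I J : Sentence A) (f : Filling) (v : ℕ) : List A :=
  (((List.range I.length).reverse).map (fun i =>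
    rowWith ((I.getD i []).drop (J.getD i []).length) (f.getD i []) v)).flatten

/-- `SkewHasType I J f K` : the skew tableau `f` of shape `I/J` has type `K`. -/
def SkewHasType (I J : Sentence A) (f : Filling) (K : Sentence A) : Prop :=
  ∀ v, 1 ≤ v → skewTypeWord I J f v = K.getD (v - 1) []

/-! ### The complement involution `ψ` and the row-strict functions -/

/-- The complement `I^c` of a sentence: the unique sentence with the same maximal word
that splits exactly where `I` does not. -/
def complSent (I : Sentence A) : Sentence A :=
  let w := I.flatten
  let n := w.length
  if n = 0 then []
  else
    let splits := (((wl I).scanl (· + ·) 0).drop 1).dropLast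
    let csplits := (List.range' 1 (n - 1)).filter (fun i => !(splits.contains i))
    splitByComp w (compOf csplits n)

/-- The `M_I`-coefficient of a colored quasisymmetric function. -/
noncomputable def coeffM (G : QSymA A) (I : Sentence A) : ℚ := G (I, List.range' 1 I.length)

/-- The image of `M_I` under `ψ`, via `M_I = Σ_{J ⪯ I} (-1)^{ℓ(J)-ℓ(I)} F_J` and
`ψ(F_J) = F_{J^c}`. -/
noncomputable def psiM (I : Sentence A) : QSymA A :=
  ∑ᶠ J ∈ {J : Sentence A | Refines J I}, ((-1 : ℚ)) ^ (J.length - I.length) • FQ (complSent J)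

/-- The linear involution `ψ` of `QSym_A`, determined by `ψ(F_I) = F_{I^c}`. -/
noncomputable def psiQ (G : QSymA A) : QSymA A :=
  ∑ᶠ I ∈ {I : Sentence A | IsSentence I}, coeffM G I • psiM I

/-- A colored row-strict immaculate tableau of shape `I`: entries strictly increase left to
right along each row and weakly increase top to bottom down the first column. -/
def IsCRSIT (I : Sentence A) (f : Filling) : Prop :=
  f.map List.length = I.map List.length ∧
  (∀ row ∈ f, row.Chain' (· < ·)) ∧
  (f.filterMap List.head?).Chain' (· ≤ ·) ∧
  (∀ x ∈ f.flatten, 1 ≤ x)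

/-- The word of the type of a row-strict tableau at value `v`: the colors of the boxes with
entry `v`, read left to right, top to bottom. -/
def rsTypeWord (I : Sentence A) (f : Filling) (v : ℕ) : List A :=
  ((I.zip f).map (fun p => rowWith p.1 p.2 v)).flatten

/-- The monomial `x_T` of a colored row-strict immaculate tableau. -/
def rsMonoOf (I : Sentence A) (f : Filling) : Mono A :=
  let vs := ((List.range (maxEntry f)).map (· + 1)).filter (fun v => !(rsTypeWord I f v).isEmpty)
  (vs.map (rsTypeWord I f), vs)

/-- The colored row-strict dual immaculate function `ℛ𝔖*_J = Σ_T x_T`, summed over all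
colored row-strict immaculate tableaux `T` of shape `J`. -/
noncomputable def rsDualImm (J : Sentence A) : QSymA A := fun m =>
  (Set.ncard {f : Filling | IsCRSIT J f ∧ rsMonoOf J f = m} : ℚ)

/-- `α ⪰ β` in the reverse lexicographic order on compositions: at the first index where
they differ, `α` has the *smaller* entry (padding with zeros). -/
def RevLexGE (α β : List ℕ) : Prop :=
  α = β ∨ ∃ i, (∀ j < i, α.getD j 0 = β.getD j 0) ∧ α.getD i 0 < β.getD i 0

/-! ### Uncolored (ordinary) versions, for `QSym` -/

namespace Uncolored

/-- A composition: a list of positive integers. -/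
def IsComposition (α : List ℕ) : Prop := ∀ a ∈ α, 1 ≤ a

/-- `β ⪯ α`: the composition `α` is obtained by summing adjacent parts of `β`. -/
def RefinesC (β α : List ℕ) : Prop :=
  ∃ P : List (List ℕ), (∀ p ∈ P, p ≠ []) ∧ P.flatten = β ∧ P.map List.sum = α

/-- A monomial `x_{i_1}^{a_1} ⋯ x_{i_m}^{a_m}` recorded by its exponents and its
strictly increasing positive indices. -/
abbrev MonoU := List ℕ × List ℕ

/-- A quasisymmetric "series", recorded by its coefficient function on monomials.
`QSym` is the span of the monomial functions `MU α` inside this space. -/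
abbrev QSymU := MonoU → ℚ

/-- Validity of a monomial: matching lengths, strictly increasing positive indices,
positive exponents. -/
def ValidMonoU (m : MonoU) : Prop :=
  m.1.length = m.2.length ∧ m.2.Chain' (· < ·) ∧ (∀ j ∈ m.2, 1 ≤ j) ∧ ∀ a ∈ m.1, 1 ≤ a

open Classical in
/-- The monomial quasisymmetric function `M_α`. -/
noncomputable def MU (α : List ℕ) : QSymU := fun m =>
  if m.1 = α ∧ ValidMonoU m then 1 else 0

/-- The fundamental quasisymmetric function `F_α = Σ_{β ⪯ α} M_β`. -/
noncomputable def FU (α : List ℕ) : QSymU :=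
  ∑ᶠ β ∈ {β : List ℕ | RefinesC β α}, MU β

/-- An immaculate tableau of shape `α`: positive integer entries, rows weakly increasing
left to right, first column strictly increasing top to bottom. -/
def IsIT (α : List ℕ) (f : Filling) : Prop :=
  f.map List.length = α ∧
  (∀ row ∈ f, row.Chain' (· ≤ ·)) ∧
  (f.filterMap List.head?).Chain' (· < ·) ∧
  (∀ x ∈ f.flatten, 1 ≤ x)

/-- The number of boxes of `f` with entry `v`. -/
def countOf (f : Filling) (v : ℕ) : ℕ := (f.flatten.filter (fun x => x == v)).length

/-- The monomial `x^T` of an immaculate tableau `T` of type `β`: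
`x_1^{β_1} ⋯ x_h^{β_h}` (zero exponents skipped). -/
def monoOfU (f : Filling) : MonoU :=
  let vs := ((List.range (maxEntry f)).map (· + 1)).filter (fun v => decide (countOf f v ≠ 0))
  (vs.map (countOf f), vs)

/-- The dual immaculate function `𝔖*_α = Σ_T x^T`, summed over all immaculate tableaux
of shape `α`. -/
noncomputable def dualImmU (α : List ℕ) : QSymU := fun m =>
  (Set.ncard {f : Filling | IsIT α f ∧ monoOfU f = m} : ℚ)

/-- The descent composition `co(U)` of a standard immaculate tableau. -/
def descComp (f : Filling) : List ℕ :=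
  if nBoxes f = 0 then [] else compOf (descList f) (nBoxes f)

/-- `L_{α,β}`: the number of standard immaculate tableaux of shape `α` with descent
composition `β`. -/
noncomputable def LU (α β : List ℕ) : ℕ :=
  Set.ncard {f : Filling | IsIT α f ∧ IsStandardF f ∧ descComp f = β}

/-- Edges of the immaculate descent graph `𝔇^n`. -/
def IsEdgeU (α β : List ℕ) : Prop := β ≠ α ∧ LU α β ≠ 0

/-- Directed paths from `α` to `β` in the immaculate descent graph, recorded by their
lists of successive vertices; `[α]` is the empty path at `α`. -/
def PathsU (α β : List ℕ) : Set (List (List ℕ)) :=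
  {p | p.head? = some α ∧ p.getLast? = some β ∧ p.Chain' IsEdgeU}

/-- The signed weight `(-1)^{ℓ(𝒫)} prod(𝒫)` of a path. -/
noncomputable def pathWeightU (p : List (List ℕ)) : ℚ :=
  ((-1 : ℚ)) ^ (p.length - 1) * ((p.zip p.tail).map (fun e => (LU e.1 e.2 : ℚ))).prod

/-- `L⁻¹_{α,β} = Σ_𝒫 (-1)^{ℓ(𝒫)} prod(𝒫)`, over directed paths from `α` to `β` in `𝔇^n`. -/
noncomputable def LinvU (α β : List ℕ) : ℚ :=
  ∑ᶠ p ∈ PathsU α β, pathWeightU p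

end Uncolored

end ColoredImm

namespace ColoredImm

theorem flat_nil_cons {A : Type*} (S : Sentence A) : flattenWS ([] :: S) = flattenWS S := by
  simp [flattenWS]

theorem flat_cons {A : Type*} {w : List A} (hw : w ≠ []) (S : Sentence A) :
    flattenWS (w :: S) = w :: flattenWS S := by
  cases w <;> simp_all [flattenWS]

theorem flat_sent {A : Type*} (S : Sentence A) : IsSentence (flattenWS S) := by
  intro w hw
  simp [flattenWS] at hw
  exact hw.2

theorem flat_of_sent {A : Type*} {S : Sentence A} (h : IsSentence S) : flattenWS S = S := by
  unfold flattenWS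
  rw [List.filter_eq_self]
  intro a ha
  have := h a ha
  simpa using this

theorem flat_flat {A : Type*} (S : Sentence A) : flattenWS (flattenWS S) = flattenWS S :=
  flat_of_sent (flat_sent S)

theorem flat_cons_flat {A : Type*} (w : List A) (S : Sentence A) :
    flattenWS (w :: flattenWS S) = flattenWS (w :: S) := by
  by_cases hw : w = []
  · subst hw; rw [flat_nil_cons, flat_nil_cons, flat_flat]
  · rw [flat_cons hw, flat_cons hw, flat_flat]

theorem flat_cons_eq {A : Type*} (w : List A) (S : Sentence A) :
    flattenWS (w :: S) = flattenWS [w] ++ flattenWS S := by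
  simp only [flattenWS]
  rw [← List.filter_append]; rfl

theorem sent_cons {A : Type*} {w : List A} {S : Sentence A} :
    IsSentence (w :: S) ↔ w ≠ [] ∧ IsSentence S := by
  simp [IsSentence]

/-- sum over all splittings of one word -/
def Sw {A : Type*} : List A → (List A → List A → ℚ) → ℚ
  | [], f => f [] []
  | x :: w, f => f [] (x :: w) + Sw w (fun a b => f (x :: a) b)

theorem Sw_eq {A : Type*} (w : List A) (f : List A → List A → ℚ) :
    Sw w f = ((List.range (w.length + 1)).map (fun t => f (w.take t) (w.drop t))).sum := by
  induction w generalizing f with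
  | nil => simp [Sw]
  | cons x w ih =>
    rw [Sw, ih, List.length_cons, List.range_succ_eq_map (n := w.length + 1)]
    simp [Function.comp_def]

theorem Sw_eq' {A : Type*} (w : List A) (f : List A → List A → ℚ) :
    Sw w f = f [] w +
      ((List.range w.length).map (fun t => f (w.take (t + 1)) (w.drop (t + 1)))).sum := by
  rw [Sw_eq, List.range_succ_eq_map]
  simp [Function.comp_def]

/-- sum over all splittings of a sentence -/
def Sp {A : Type*} (m : Sentence A) (f : Sentence A → Sentence A → ℚ) : ℚ :=
  ((splitsOf m).map (fun p => f p.1 p.2)).sum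

theorem Sp_nil {A : Type*} (f : Sentence A → Sentence A → ℚ) : Sp [] f = f [] [] := by
  simp [Sp, splitsOf]

theorem Sp_cons {A : Type*} (w : List A) (m : Sentence A) (f : Sentence A → Sentence A → ℚ) :
    Sp (w :: m) f = Sp m (fun p s => Sw w (fun a b => f (a :: p) (b :: s))) := by
  simp only [Sp, splitsOf, Sw_eq]
  generalize splitsOf m = l
  induction l with
  | nil => simp
  | cons x l ih => simp [Function.comp_def]

theorem Sp_add {A : Type*} (m : Sentence A) (f g : Sentence A → Sentence A → ℚ) :
    Sp m (fun p s => f p s + g p s) = Sp m f + Sp m g := by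
  simp [Sp, List.sum_map_add]

theorem Sp_zero {A : Type*} (m : Sentence A) :
    Sp m (fun _ _ => 0) = 0 := by
  simp [Sp]

theorem Sp_mul {A : Type*} (m : Sentence A) (c : ℚ) (f : Sentence A → Sentence A → ℚ) :
    Sp m (fun p s => c * f p s) = c * Sp m f := by
  simp [Sp, List.sum_map_mul_left]

theorem Sw_add {A : Type*} (m : List A) (f g : List A → List A → ℚ) :
    Sw m (fun p s => f p s + g p s) = Sw m f + Sw m g := by
  simp [Sw_eq, List.sum_map_add]

theorem Sw_Sp {A : Type*} (w : List A) (m : Sentence A)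
    (f : List A → List A → Sentence A → Sentence A → ℚ) :
    Sw w (fun a b => Sp m (f a b)) = Sp m (fun p s => Sw w (fun a b => f a b p s)) := by
  induction w generalizing f with
  | nil => simp [Sw]
  | cons x w ih => simp only [Sw, Sp_add, ih]

theorem Sw_coassoc {A : Type*} (w : List A) (f : List A → List A → List A → ℚ) :
    Sw w (fun a b => Sw a (fun a1 a2 => f a1 a2 b)) =
      Sw w (fun a b => Sw b (fun b1 b2 => f a b1 b2)) := by
  induction w generalizing f with
  | nil => simp [Sw]
  | cons x w ih =>
    simp only [Sw, Sw_add]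
    rw [ih (fun a b c => f (x :: a) b c)]
    ring

theorem Sp_coassoc {A : Type*} (m : Sentence A) (f : Sentence A → Sentence A → Sentence A → ℚ) :
    Sp m (fun a b => Sp a (fun a1 a2 => f a1 a2 b)) =
      Sp m (fun a b => Sp b (fun b1 b2 => f a b1 b2)) := by
  induction m generalizing f with
  | nil => simp [Sp_nil]
  | cons w m ih =>
    simp only [Sp_cons, Sw_Sp]
    rw [ih (fun p1 p2 s => Sw w fun a b => Sw a fun a1 b1 => f (a1 :: p1) (b1 :: p2) (b :: s))]
    simp only [Sw_coassoc w (fun a b c => f (a :: _) (b :: _) (c :: _))]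

theorem Sp_flat {A : Type*} (m : Sentence A) (f : Sentence A → List A → ℚ) :
    Sp (flattenWS m) (fun p s => f (flattenWS p) s.flatten) =
      Sp m (fun p s => f (flattenWS p) s.flatten) := by
  induction m generalizing f with
  | nil => rfl
  | cons w m ih =>
    by_cases hw : w = []
    · subst hw
      rw [flat_nil_cons, ih, Sp_cons]
      simp [Sw, flat_nil_cons]
    · rw [flat_cons hw, Sp_cons, Sp_cons]
      have e : (fun p s : Sentence A => Sw w fun a b =>
            f (flattenWS (a :: p)) (List.flatten (b :: s))) =
          fun p s => Sw w fun a b => f (flattenWS [a] ++ flattenWS p) (b ++ s.flatten) := by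
        funext p s
        congr 1
        funext a b
        rw [flat_cons_eq, List.flatten_cons]
      rw [e]
      exact ih (fun p s => Sw w fun a b => f (flattenWS [a] ++ p) (b ++ s))

theorem Sw_last {A : Type*} (w : List A) (c : Prop) [Decidable c] (f : List A → ℚ) :
    Sw w (fun a b => if b = [] ∧ c then f a else 0) = if c then f w else 0 := by
  induction w generalizing f with
  | nil => simp [Sw]
  | cons x w ih => simp [Sw, ih (fun a => f (x :: a))]

theorem flat_cons_eq_nil {A : Type*} (w : List A) (S : Sentence A) :
    flattenWS (w :: S) = [] ↔ w = [] ∧ flattenWS S = [] := by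
  by_cases hw : w = []
  · subst hw; simp [flat_nil_cons]
  · simp [flat_cons hw, hw]

theorem Sp_last {A : Type*} (m : Sentence A) (f : Sentence A → ℚ) :
    Sp m (fun p s => if flattenWS s = [] then f p else 0) = f m := by
  induction m generalizing f with
  | nil => simp [Sp_nil, flattenWS]
  | cons w m ih =>
    simp only [Sp_cons, flat_cons_eq_nil]
    rw [← ih (fun p => f (w :: p))]
    congr 1
    funext p s
    exact Sw_last w _ (fun a => f (a :: p))

/-- refinements of a sentence, with fuel -/
def refsN {A : Type*} : ℕ → Sentence A → List (Sentence A)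
  | _, [] => [[]]
  | 0, _ :: _ => []
  | n + 1, k :: S => (List.range k.length).flatMap (fun t =>
      (refsN n (flattenWS (k.drop (t + 1) :: S))).map (fun Q => k.take (t + 1) :: Q))

theorem size_cons {A : Type*} (w : List A) (S : Sentence A) :
    size (w :: S) = w.length + size S := by simp [size]

theorem size_flat {A : Type*} (S : Sentence A) : size (flattenWS S) = size S := by
  induction S with
  | nil => rfl
  | cons w S ih =>
    by_cases hw : w = []
    · subst hw; rw [flat_nil_cons, ih, size_cons]; simp
    · rw [flat_cons hw, size_cons, size_cons, ih]

theorem refsN_fuel {A : Type*} (n : ℕ) (S : Sentence A) (h : size S ≤ n) (hS : IsSentence S) :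
    refsN n S = refsN (size S) S := by
  induction n using Nat.strong_induction_on generalizing S with
  | _ n ih =>
    match n, S with
    | n, [] => simp [refsN]
    | 0, k :: S =>
      have := (sent_cons.1 hS).1
      have : 0 < k.length := List.length_pos_iff.2 this
      rw [size_cons] at h; omega
    | n + 1, k :: S =>
      have := (sent_cons.1 hS).1
      have hk : 0 < k.length := List.length_pos_iff.2 this
      rw [size_cons] at h
      have e : size (k :: S) = (size (k :: S) - 1) + 1 := by rw [size_cons]; omega
      rw [e, refsN, refsN]
      apply List.flatMap_congr
      intro t ht
      have ht' : t < k.length := by simpa using ht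
      have e2 : size (flattenWS (k.drop (t + 1) :: S)) = k.length - (t + 1) + size S := by
        rw [size_flat, size_cons]; simp
      rw [ih n (by omega) _ (by omega) (flat_sent _)]
      rw [size_cons]
      rw [ih (k.length + size S - 1) (by omega) _ (by omega) (flat_sent _)]

/-- all refinements of a sentence -/
def refs {A : Type*} (S : Sentence A) : List (Sentence A) := refsN (size S) S

theorem refs_nil {A : Type*} : refs ([] : Sentence A) = [[]] := by simp [refs, refsN]

theorem refs_cons {A : Type*} (k : List A) (S : Sentence A) (h : IsSentence (k :: S)) :
    refs (k :: S) = (List.range k.length).flatMap (fun t =>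
      (refs (flattenWS (k.drop (t + 1) :: S))).map (fun Q => k.take (t + 1) :: Q)) := by
  have := (sent_cons.1 h).1
  have hk : 0 < k.length := List.length_pos_iff.2 this
  have e : size (k :: S) = (size (k :: S) - 1) + 1 := by rw [size_cons]; omega
  rw [refs, e, refsN]
  apply List.flatMap_congr
  intro t ht
  have ht' : t < k.length := by simpa using ht
  rw [refsN_fuel _ _ _ (flat_sent _)]
  · rfl
  · rw [size_flat, size_cons, size_cons]; simp; omega

/-- the signed sum over refinements -/
def Gs {A : Type*} (g : List A → ℚ) (r : List A) (S : Sentence A) : ℚ :=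
  ((refs S).map (fun Q => (-1 : ℚ) ^ Q.length * g (Q.reverse.flatten ++ r))).sum

theorem Gs_cons {A : Type*} (g : List A → ℚ) (r k : List A) (S : Sentence A)
    (h : IsSentence (k :: S)) :
    Gs g r (k :: S) + ((List.range k.length).map (fun t =>
      Gs g (k.take (t + 1) ++ r) (flattenWS (k.drop (t + 1) :: S)))).sum = 0 := by
  rw [Gs, refs_cons k S h]
  generalize List.range k.length = l
  induction l with
  | nil => simp
  | cons t l ih =>
    have : (List.map (fun Q : Sentence A => (-1 : ℚ) ^ Q.length * g (Q.reverse.flatten ++ r))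
        (List.map (fun Q => k.take (t + 1) :: Q)
          (refs (flattenWS (k.drop (t + 1) :: S))))).sum =
        - Gs g (k.take (t + 1) ++ r) (flattenWS (k.drop (t + 1) :: S)) := by
      rw [Gs, List.map_map, neg_eq_neg_one_mul (List.sum _), ← List.sum_map_mul_left]
      congr 1
      apply List.map_congr_left
      intro Q _
      simp [pow_succ]
    rw [List.flatMap_cons, List.map_append, List.sum_append, this, List.map_cons, List.sum_cons]
    linarith

theorem Gs_cancel {A : Type*} (g : List A → ℚ) (m : Sentence A) :
    Sp m (fun p s => Gs g p.flatten (flattenWS s)) = if flattenWS m = [] then g [] else 0 := by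
  induction m with
  | nil => simp [Sp_nil, flattenWS, Gs, refs_nil]
  | cons k m ih =>
    by_cases hw : k = []
    · subst hw
      rw [flat_nil_cons, ← ih, Sp_cons]
      simp [Sw, flat_nil_cons]
    · rw [flat_cons hw, if_neg (by simp), Sp_cons, ← Sp_zero m]
      congr 1
      funext p s
      rw [Sw_eq']
      have := Gs_cons g p.flatten k (flattenWS s) (sent_cons.2 ⟨hw, flat_sent _⟩)
      simpa [flat_cons_flat, flat_cons hw] using this

end ColoredImm

namespace ColoredImm

theorem refines_nil {A : Type*} (Q : Sentence A) : Refines Q [] ↔ Q = [] := by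
  constructor
  · rintro ⟨P, _, h2, h3⟩
    have : P = [] := by simpa using h3
    subst this; simpa using h2.symm
  · rintro rfl; exact ⟨[], by simp, rfl, rfl⟩

theorem refines_cons {A : Type*} (k : List A) (S Q : Sentence A) (h : IsSentence (k :: S)) :
    (IsSentence Q ∧ Refines Q (k :: S)) ↔ ∃ t < k.length, ∃ Q', (IsSentence Q' ∧
      Refines Q' (flattenWS (k.drop (t + 1) :: S))) ∧ k.take (t + 1) :: Q' = Q := by
  obtain ⟨hk, hS⟩ := sent_cons.1 h
  constructor
  · rintro ⟨hQ, P, h1, h2, h3⟩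
    obtain ⟨p, P', rfl, hp, hP'⟩ := List.map_eq_cons_iff.1 h3
    have hpne : p ≠ [] := h1 p (by simp)
    obtain ⟨q, p', rfl⟩ := List.exists_cons_of_ne_nil hpne
    subst h2
    have hq : q ≠ [] := hQ q (by simp)
    have hql : 0 < q.length := List.length_pos_iff.2 hq
    have hk' : k = q ++ p'.flatten := by rw [← hp]; simp
    have e1 : k.take (q.length - 1 + 1) = q := by
      rw [Nat.sub_add_cancel hql, hk']; simp
    have e2 : k.drop (q.length - 1 + 1) = p'.flatten := by
      rw [Nat.sub_add_cancel hql, hk']; simp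
    refine ⟨q.length - 1, ?_, p' ++ P'.flatten, ⟨?_, ?_⟩, ?_⟩
    · rw [hk']; simp; omega
    · intro w hw
      apply hQ
      simp only [List.flatten_cons, List.cons_append, List.mem_cons]
      exact Or.inr hw
    · rw [e2]
      by_cases hp' : p' = []
      · subst hp'
        simp only [List.flatten_nil, flat_nil_cons, List.nil_append]
        rw [flat_of_sent hS]
        exact ⟨P', fun x hx => h1 x (by simp [hx]), rfl, hP'⟩
      · have : p'.flatten ≠ [] := by
          obtain ⟨w, p'', rfl⟩ := List.exists_cons_of_ne_nil hp'
          have : w ≠ [] := hQ w (by simp)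
          simp [this]
        rw [flat_cons this, flat_of_sent hS]
        refine ⟨p' :: P', ?_, rfl, by simp [hP']⟩
        intro x hx
        rcases List.mem_cons.1 hx with rfl | hx
        · exact hp'
        · exact h1 x (by simp [hx])
    · rw [e1]; simp
  · rintro ⟨t, ht, Q', ⟨hQ', P, h1, h2, h3⟩, rfl⟩
    have hne : k.take (t + 1) ≠ [] := by simp [hk]
    refine ⟨sent_cons.2 ⟨hne, hQ'⟩, ?_⟩
    by_cases hd : k.drop (t + 1) = []
    · rw [hd, flat_nil_cons, flat_of_sent hS] at h3
      refine ⟨[k.take (t + 1)] :: P, ?_, by simp [h2], ?_⟩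
      · intro x hx
        rcases List.mem_cons.1 hx with rfl | hx
        · simp
        · exact h1 x hx
      · have : k.take (t + 1) = k := by
          conv_rhs => rw [← List.take_append_drop (t + 1) k, hd]
          simp
        simp [h3, this]
    · rw [flat_cons hd, flat_of_sent hS] at h3
      obtain ⟨p, P', rfl, hp, hP'⟩ := List.map_eq_cons_iff.1 h3
      refine ⟨(k.take (t + 1) :: p) :: P', ?_, ?_, ?_⟩
      · intro x hx
        rcases List.mem_cons.1 hx with rfl | hx
        · simp
        · exact h1 x (by simp [hx])
      · rw [← h2]; simp
      · simp [hp, hP']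

theorem mem_refs {A : Type*} (n : ℕ) (S Q : Sentence A) (h : IsSentence S) (hn : size S ≤ n) :
    Q ∈ refs S ↔ (IsSentence Q ∧ Refines Q S) := by
  induction n generalizing S Q with
  | zero =>
    cases S with
    | nil =>
      rw [refs_nil, refines_nil, List.mem_singleton]
      constructor
      · rintro rfl; exact ⟨h, rfl⟩
      · exact fun x => x.2
    | cons k S =>
      have := List.length_pos_iff.2 (sent_cons.1 h).1
      rw [size_cons] at hn; omega
  | succ n ih =>
    cases S with
    | nil =>
      rw [refs_nil, refines_nil, List.mem_singleton]
      constructor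
      · rintro rfl; exact ⟨h, rfl⟩
      · exact fun x => x.2
    | cons k S =>
      have := List.length_pos_iff.2 (sent_cons.1 h).1
      rw [size_cons] at hn
      rw [refines_cons k S Q h, refs_cons k S h]
      simp only [List.mem_flatMap, List.mem_range, List.mem_map]
      apply exists_congr; intro t
      apply and_congr_right; intro ht
      apply exists_congr; intro Q'
      rw [ih _ _ (flat_sent _) (by rw [size_flat, size_cons]; simp; omega)]

theorem refs_nodup {A : Type*} (n : ℕ) (S : Sentence A) (h : IsSentence S) (hn : size S ≤ n) :
    (refs S).Nodup := by
  induction n generalizing S with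
  | zero =>
    cases S with
    | nil => simp [refs_nil]
    | cons k S =>
      have := List.length_pos_iff.2 (sent_cons.1 h).1
      rw [size_cons] at hn; omega
  | succ n ih =>
    cases S with
    | nil => simp [refs_nil]
    | cons k S =>
      have := List.length_pos_iff.2 (sent_cons.1 h).1
      rw [size_cons] at hn
      rw [refs_cons k S h, List.nodup_flatMap]
      constructor
      · intro t _
        apply List.Nodup.map
        · intro a b hab; simpa using hab
        · exact ih _ (flat_sent _) (by rw [size_flat, size_cons]; simp; omega)
      · apply List.Nodup.pairwise_of_forall_ne List.nodup_range
        intro a ha b hb hab Q h1 h2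
        simp only [List.mem_map, List.mem_range] at h1 h2 ha hb
        obtain ⟨Q1, _, rfl⟩ := h1
        obtain ⟨Q2, _, h3⟩ := h2
        apply hab
        have := congrArg List.length (List.cons.inj h3).1
        simp at this
        omega

theorem finsum_mem_list {X Y V : Type*} [AddCommMonoid V] (P : Set Y) (l : List X) (φ : X → Y → V)
    (h : ∀ x ∈ l, (P ∩ Function.support (φ x)).Finite) :
    (∑ᶠ y ∈ P, (l.map fun x => φ x y).sum) = (l.map fun x => ∑ᶠ y ∈ P, φ x y).sum ∧
    (P ∩ Function.support (fun y => (l.map fun x => φ x y).sum)).Finite := by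
  induction l with
  | nil => simp
  | cons x l ih =>
    obtain ⟨h1, h2⟩ := ih (fun y hy => h y (by simp [hy]))
    have h3 := h x (by simp)
    simp only [List.map_cons, List.sum_cons]
    constructor
    · rw [finsum_mem_add_distrib' h3 h2, h1]
    · refine (h3.union h2).subset ?_
      rintro y ⟨hy, hy2⟩
      by_contra hc
      simp only [Set.mem_union, Set.mem_inter_iff, hy, true_and, Function.mem_support, not_or,
        not_not] at hc
      exact hy2 (by simp only [hc.1, hc.2, add_zero])

theorem finsum_mem_one {Y V : Type*} [AddCommMonoid V] (P : Set Y) (y0 : Y) (φ : Y → V)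
    [∀ y, Decidable (y0 = y)] [Decidable (y0 ∈ P)] :
    (∑ᶠ y ∈ P, (if y0 = y then φ y else 0)) = if y0 ∈ P then φ y0 else 0 := by
  classical
  have : ∀ y, (∑ᶠ (_ : y ∈ P), (if y0 = y then φ y else 0)) =
      if y = y0 then (if y0 ∈ P then φ y0 else 0) else 0 := by
    intro y
    rw [finsum_eq_if]
    by_cases hy : y = y0
    · subst hy; simp
    · simp [hy, Ne.symm hy]
  simp only [this]
  rw [finsum_eq_single _ y0]
  · simp
  · intro y hy; simp [hy]

theorem supp_one {Y V : Type*} [AddCommMonoid V] (P : Set Y) (y0 : Y) (φ : Y → V)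
    [∀ y, Decidable (y0 = y)] :
    (P ∩ Function.support (fun y => if y0 = y then φ y else 0)).Finite := by
  refine (Set.finite_singleton y0).subset ?_
  rintro y ⟨_, hy⟩
  by_contra hc
  apply hy
  simp only [Set.mem_singleton_iff] at hc
  simp [Ne.symm hc]

/-- formal sums -/
noncomputable def toN {A : Type*} (l : List (ℚ × Sentence A)) : NSymA A :=
  (l.map fun c => c.1 • Hd c.2).sum

theorem pair_toN {A : Type*} (l : List (ℚ × Sentence A)) (h : ∀ c ∈ l, IsSentence c.2)
    (F : QSymA A) :
    pairNQ (toN l) F = (l.map fun c => c.1 * F (c.2, List.range' 1 c.2.length)).sum := by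
  classical
  unfold pairNQ
  have e : ∀ I, toN l I * F (I, List.range' 1 I.length) =
      (l.map fun c => if c.2 = I then c.1 * F (I, List.range' 1 I.length) else 0).sum := by
    intro I
    unfold toN
    clear h
    induction l with
    | nil => simp
    | cons c l ih =>
      simp only [List.map_cons, List.sum_cons, Pi.add_apply, add_mul, ih]
      congr 1
      by_cases hc : c.2 = I
      · simp [Hd, hc]
      · simp [Hd, hc, Ne.symm hc]
  simp only [e]
  rw [(finsum_mem_list _ l _ (fun c _ => supp_one _ _ _)).1]
  congr 1
  apply List.map_congr_left
  intro c hc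
  rw [finsum_mem_one]
  simp [h c hc]

theorem splits_length {A : Type*} (m : Sentence A) : ∀ x ∈ splitsOf m,
    x.1.length = m.length ∧ x.2.length = m.length := by
  induction m with
  | nil => simp [splitsOf]
  | cons w m ih =>
    intro x hx
    simp only [splitsOf, List.mem_flatten, List.mem_map] at hx
    obtain ⟨l, ⟨p, hp, rfl⟩, hx⟩ := hx
    simp only [List.mem_map] at hx
    obtain ⟨t, _, rfl⟩ := hx
    simpa using ih p hp

theorem restrict_fst {A : Type*} (p : Sentence A) (js : List ℕ) (h : p.length = js.length) :
    (restrictMono p js).1 = flattenWS p := by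
  induction p generalizing js with
  | nil => simp [restrictMono, flattenWS]
  | cons w p ih =>
    cases js with
    | nil => simp at h
    | cons j js =>
      have := ih js (by simpa using h)
      simp only [restrictMono] at this
      by_cases hw : w = []
      · subst hw; rw [flat_nil_cons, ← this]; simp [restrictMono]
      · rw [flat_cons hw, ← this]; simp [restrictMono, hw]

theorem restrict_valid {A : Type*} (p : Sentence A) (n : ℕ) (h : p.length = n) :
    ValidMono (restrictMono p (List.range' 1 n)) := by
  have hsub : ((restrictMono p (List.range' 1 n)).2).Sublist (List.range' 1 n) := by
    have h1 : ((p.zip (List.range' 1 n)).map Prod.snd) = List.range' 1 n := by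
      rw [List.map_snd_zip]; simp [h]
    conv_rhs => rw [← h1]
    exact List.Sublist.map _ List.filter_sublist
  refine ⟨by simp [restrictMono], ?_, ?_, ?_⟩
  · apply List.Pairwise.isChain
    exact List.Pairwise.sublist hsub List.pairwise_lt_range'
  · intro j hj
    have := hsub.subset hj
    simp at this; omega
  · rw [restrict_fst _ _ (by simp [h])]
    exact flat_sent p

open Classical in
theorem mulQ_MQ {A : Type*} (I S L : Sentence A) :
    mulQ (MQ I) (MQ S) (L, List.range' 1 L.length) =
      ((splitsOf L).map fun p => if flattenWS p.1 = I then
        (if flattenWS p.2 = S then (1 : ℚ) else 0) else 0).sum := by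
  unfold mulQ
  congr 1
  apply List.map_congr_left
  intro p hp
  obtain ⟨h1, h2⟩ := splits_length L p hp
  simp only [MQ]
  rw [restrict_fst _ _ (by simp [h1]), restrict_fst _ _ (by simp [h2])]
  simp only [restrict_valid p.1 _ h1, restrict_valid p.2 _ h2, and_true]
  split_ifs <;> simp

/-- all splittings of all terms -/
def spl {A : Type*} (l : List (ℚ × Sentence A)) : List (ℚ × Sentence A × Sentence A) :=
  l.flatMap fun c => (splitsOf c.2).map fun p => (c.1, p)

open Classical in
theorem pair_mulQ {A : Type*} (l : List (ℚ × Sentence A)) (h : ∀ c ∈ l, IsSentence c.2)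
    (I S : Sentence A) :
    pairNQ (toN l) (mulQ (MQ I) (MQ S)) =
      ((spl l).map fun x => if flattenWS x.2.1 = I then
        (if flattenWS x.2.2 = S then x.1 else 0) else 0).sum := by
  rw [pair_toN l h]
  clear h
  induction l with
  | nil => simp [spl]
  | cons c l ih =>
    rw [List.map_cons, List.sum_cons, ih]
    simp only [spl, List.flatMap_cons, List.map_append, List.sum_append, mulQ_MQ]
    congr 1
    rw [← List.sum_map_mul_left, List.map_map]
    congr 1
    apply List.map_congr_left
    intro p _
    simp

theorem list_sum_smul {X V : Type*} [AddCommGroup V] [Module ℚ V] (l : List X) (g : X → ℚ)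
    (v : V) : (l.map g).sum • v = (l.map fun x => g x • v).sum := by
  induction l with
  | nil => simp
  | cons x l ih => simp [add_smul, ih]

theorem smul_list_sum {X V : Type*} [AddCommGroup V] [Module ℚ V] (l : List X) (g : X → V)
    (c : ℚ) : c • (l.map g).sum = (l.map fun x => c • g x).sum := by
  induction l with
  | nil => simp
  | cons x l ih => simp [smul_add, ih]

open Classical in
theorem rperp_toN {A : Type*} (l : List (ℚ × Sentence A)) (h : ∀ c ∈ l, IsSentence c.2)
    (S : Sentence A) :
    rperp (MQ S) (toN l) =
      ((spl l).map fun x => if flattenWS x.2.2 = S then x.1 • Hd (flattenWS x.2.1) else 0).sum := by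
  unfold rperp
  have e : ∀ I : Sentence A, pairNQ (toN l) (mulQ (MQ I) (MQ S)) • Hd I =
      ((spl l).map fun x => if flattenWS x.2.1 = I then
        (if flattenWS x.2.2 = S then x.1 else 0) • Hd I else 0).sum := by
    intro I
    rw [pair_mulQ l h, list_sum_smul]
    congr 1
    apply List.map_congr_left
    intro x _
    split_ifs <;> simp
  simp only [e]
  rw [(finsum_mem_list _ (spl l) _ (fun c _ => supp_one _ _ _)).1]
  congr 1
  apply List.map_congr_left
  intro x _
  rw [finsum_mem_one]
  simp [flat_sent]

open Classical in
theorem rperp_sum {A : Type*} (l : List (ℚ × Sentence A)) (h : ∀ c ∈ l, IsSentence c.2)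
    (Q : Sentence A) :
    (∑ᶠ S ∈ {S : Sentence A | Refines Q S}, rperp (MQ S) (toN l)) =
      ((spl l).map fun x => if Refines Q (flattenWS x.2.2) then
        x.1 • Hd (flattenWS x.2.1) else 0).sum := by
  simp only [rperp_toN l h]
  rw [(finsum_mem_list _ (spl l) _ (fun c _ => supp_one _ _ _)).1]
  congr 1
  apply List.map_congr_left
  intro x _
  rw [finsum_mem_one]
  simp

theorem mulN_Hd {A : Type*} (w : List A) (hw : w ≠ []) (K : Sentence A) (c : ℚ) :
    mulN (Hw w) (c • Hd K) = c • Hd (w :: K) := by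
  classical
  funext I
  simp only [mulN, Hw]
  rw [if_neg (by simpa using hw)]
  cases I with
  | nil => simp [Hd]
  | cons x I =>
    rw [Finset.sum_eq_single 1]
    · simp only [Hd, Pi.smul_apply, List.take_succ_cons, List.take_zero, List.drop_succ_cons,
        List.drop_zero, smul_eq_mul]
      by_cases h1 : x = w <;> by_cases h2 : I = K <;> simp [h1, h2]
    · intro j hj h1
      have : (List.take j (x :: I)) ≠ [w] := by
        intro h
        have := congrArg List.length h
        simp at this hj
        omega
      simp [Hd, this]
    · simp

theorem mulN_sum {A X : Type*} (f : NSymA A) (l : List X) (g : X → NSymA A) :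
    mulN f (l.map g).sum = (l.map fun x => mulN f (g x)).sum := by
  induction l with
  | nil => funext I; simp [mulN]
  | cons x l ih =>
    rw [List.map_cons, List.sum_cons, List.map_cons, List.sum_cons, ← ih]
    funext I; simp [mulN, mul_add, Finset.sum_add_distrib]

/-- explicit Bernstein operator -/
def bernL {A : Type*} (v : List A) (l : List (ℚ × Sentence A)) : List (ℚ × Sentence A) :=
  (spl l).flatMap fun x => (refs (flattenWS x.2.2)).map fun Q =>
    (x.1 * (-1) ^ Q.length, (v ++ Q.reverse.flatten) :: flattenWS x.2.1)

theorem list_sum_flatMap {X Y V : Type*} [AddCommMonoid V] (l : List X) (g : X → List Y)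
    (φ : Y → V) :
    ((l.flatMap g).map φ).sum = (l.map fun x => ((g x).map φ).sum).sum := by
  induction l with
  | nil => simp
  | cons x l ih => simp [ih]

theorem Bern_toN {A : Type*} (v : List A) (hv : v ≠ []) (l : List (ℚ × Sentence A))
    (h : ∀ c ∈ l, IsSentence c.2) :
    Bern v (toN l) = toN (bernL v l) := by
  classical
  unfold Bern
  have e : ∀ Q : Sentence A, ((-1 : ℚ)) ^ Q.length •
      mulN (Hw (v ++ Q.reverse.flatten))
        (∑ᶠ S ∈ {S : Sentence A | Refines Q S}, rperp (MQ S) (toN l)) =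
      ((spl l).map fun x => if Refines Q (flattenWS x.2.2) then
        (x.1 * (-1 : ℚ) ^ Q.length) • Hd ((v ++ Q.reverse.flatten) :: flattenWS x.2.1)
          else 0).sum := by
    intro Q
    rw [rperp_sum l h, mulN_sum, smul_list_sum]
    congr 1
    apply List.map_congr_left
    intro x _
    split_ifs
    · rw [mulN_Hd _ (by simp [hv]), smul_smul, mul_comm]
    · funext I; simp [mulN]
  simp only [e]
  have hs : ∀ (S : Sentence A) (φ : Sentence A → NSymA A), IsSentence S →
      ({Q : Sentence A | IsSentence Q} ∩ Function.support
        (fun Q => if Refines Q S then φ Q else 0)) ⊆ (refs S).toFinset := by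
    rintro S φ hS Q ⟨h1, h2⟩
    simp only [List.coe_toFinset, Set.mem_ofPred_eq, mem_refs _ S Q hS le_rfl]
    refine ⟨h1, ?_⟩
    by_contra hc
    simp [hc] at h2
  rw [(finsum_mem_list _ (spl l) _ (fun c _ => (Finset.finite_toSet _).subset
    (hs _ _ (flat_sent _)))).1]
  rw [toN, bernL, list_sum_flatMap]
  congr 1
  apply List.map_congr_left
  intro x _
  generalize hS : flattenWS x.2.2 = S
  have hS' : IsSentence S := hS ▸ flat_sent _
  rw [List.map_map, ← List.sum_toFinset _ (refs_nodup _ S hS' le_rfl)]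
  have : ∀ Q : Sentence A, (∑ᶠ (_ : Q ∈ {Q : Sentence A | IsSentence Q}), 
      if Refines Q S then (x.1 * (-1 : ℚ) ^ Q.length) •
        Hd ((v ++ Q.reverse.flatten) :: flattenWS x.2.1) else 0) =
      ∑ᶠ (_ : Q ∈ (refs S).toFinset), (x.1 * (-1 : ℚ) ^ Q.length) •
        Hd ((v ++ Q.reverse.flatten) :: flattenWS x.2.1) := by
    intro Q
    rw [finsum_eq_if, finsum_eq_if]
    by_cases h1 : IsSentence Q <;> by_cases h2 : Refines Q S <;>
      simp [mem_refs _ S Q hS' le_rfl, h1, h2]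
  simp only [this]
  rw [finsum_mem_finset_eq_sum]
  rfl

theorem bernL_sent {A : Type*} (v : List A) (hv : v ≠ []) (l : List (ℚ × Sentence A)) :
    ∀ c ∈ bernL v l, IsSentence c.2 := by
  intro c hc
  simp only [bernL, List.mem_flatMap, List.mem_map] at hc
  obtain ⟨x, _, Q, _, rfl⟩ := hc
  exact sent_cons.2 ⟨by simp [hv], flat_sent _⟩

/-- the main cancellation, abstractly in the dual coefficients `D` -/
theorem bernL_pair {A : Type*} [DecidableEq A] (D D' : Sentence A → ℚ) (v j : List A)
    (hD : ∀ w K, w ≠ [] → IsSentence K → D (w :: K) =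
      Sp K (fun p s => if w ++ s.flatten = j then D' (flattenWS p) else 0))
    (hv : v ≠ []) (l : List (ℚ × Sentence A)) (h : ∀ c ∈ l, IsSentence c.2) :
    ((bernL v l).map fun c => c.1 * D c.2).sum =
      if v = j then (l.map fun c => c.1 * D' c.2).sum else 0 := by
  have key : ∀ L : Sentence A, IsSentence L → Sp L (fun p s =>
      ((refs (flattenWS s)).map fun Q => (-1 : ℚ) ^ Q.length *
        D ((v ++ Q.reverse.flatten) :: flattenWS p)).sum) = if v = j then D' L else 0 := by
    intro L hL
    set g : List A → ℚ := fun x => if v ++ x = j then 1 else 0 with hg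
    have e1 : ∀ p s : Sentence A, ((refs (flattenWS s)).map fun Q => (-1 : ℚ) ^ Q.length *
        D ((v ++ Q.reverse.flatten) :: flattenWS p)).sum =
        Sp p (fun p1 p2 => D' (flattenWS p1) * Gs g p2.flatten (flattenWS s)) := by
      intro p s
      rw [← Sp_flat p (fun a b => D' a * Gs g b (flattenWS s))]
      unfold Gs
      generalize refs (flattenWS s) = R
      induction R with
      | nil => simp [Sp_zero]
      | cons Q R ih =>
        simp only [List.map_cons, List.sum_cons, mul_add, Sp_add, ih]
        congr 1
        rw [hD _ _ (by simp [hv]) (flat_sent _), ← Sp_mul]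
        congr 1
        funext a b
        simp only [hg, List.append_assoc]
        split_ifs <;> ring
    simp only [e1]
    rw [Sp_coassoc L (fun a b c => D' (flattenWS a) * Gs g b.flatten (flattenWS c))]
    simp only [Sp_mul, Gs_cancel]
    have : (fun a b : Sentence A => D' (flattenWS a) * if flattenWS b = [] then g [] else 0) =
        (fun a b => if flattenWS b = [] then D' (flattenWS a) * g [] else 0) := by
      funext a b; split_ifs <;> simp
    rw [this, Sp_last L (fun a => D' (flattenWS a) * g []), flat_of_sent hL]
    simp [hg]
  rw [bernL, list_sum_flatMap, spl, list_sum_flatMap]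
  have : ∀ c ∈ l, (List.map (fun x : ℚ × Sentence A × Sentence A => (List.map (fun c : ℚ × Sentence A => c.1 * D c.2)
      (List.map (fun Q => (x.1 * (-1) ^ Q.length, (v ++ Q.reverse.flatten) :: flattenWS x.2.1))
        (refs (flattenWS x.2.2)))).sum) ((splitsOf c.2).map fun p => (c.1, p))).sum =
        if v = j then c.1 * D' c.2 else 0 := by
    intro c hc
    have := key c.2 (h c hc)
    rw [← mul_ite_zero, ← this, ← Sp_mul, Sp, List.map_map]
    congr 1
    apply List.map_congr_left
    intro p _
    simp only [Function.comp_apply, List.map_map]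
    rw [← List.sum_map_mul_left]
    congr 1
    apply List.map_congr_left
    intro Q _
    simp [mul_assoc]
  rw [List.map_congr_left this]
  split_ifs <;> simp

end ColoredImm

namespace ColoredImm

theorem rowWith_nil {A : Type*} (row : List ℕ) (x : ℕ) : rowWith ([] : List A) row x = [] := by
  simp [rowWith]

theorem rowWith_nil_right {A : Type*} (w : List A) (x : ℕ) : rowWith w [] x = [] := by
  simp [rowWith]

theorem rowWith_cons {A : Type*} (a : A) (w : List A) (b : ℕ) (row : List ℕ) (x : ℕ) :
    rowWith (a :: w) (b :: row) x = if b = x then a :: rowWith w row x else rowWith w row x := by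
  by_cases h : b = x <;> simp [rowWith, h]

theorem typeWord_cons {A : Type*} (v : List A) (J : Sentence A) (row : List ℕ) (f : Filling)
    (x : ℕ) : typeWord (v :: J) (row :: f) x = typeWord J f x ++ rowWith v row x := by
  simp [typeWord]

theorem typeWord_nil {A : Type*} (f : Filling) (x : ℕ) : typeWord ([] : Sentence A) f x = [] := by
  simp [typeWord]

theorem typeWord_nil_right {A : Type*} (J : Sentence A) (x : ℕ) : typeWord J [] x = [] := by
  simp [typeWord]

theorem rowWith_ne {A : Type*} (w : List A) (row : List ℕ) (x : ℕ) (h : row.length = w.length) :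
    rowWith w row x ≠ [] ↔ x ∈ row := by
  induction w generalizing row with
  | nil => simp at h; subst h; simp [rowWith_nil]
  | cons a w ih =>
    cases row with
    | nil => simp at h
    | cons b row =>
      rw [rowWith_cons]
      have := ih row (by simpa using h)
      by_cases hb : b = x
      · simp [hb]
      · simp [hb, Ne.symm hb, this]

theorem typeWord_ne {A : Type*} (J : Sentence A) (f : Filling) (x : ℕ)
    (h : f.map List.length = J.map List.length) :
    typeWord J f x ≠ [] ↔ x ∈ f.flatten := by
  induction J generalizing f with
  | nil => simp at h; subst h; simp [typeWord_nil]
  | cons v J ih =>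
    cases f with
    | nil => simp at h
    | cons row f =>
      simp only [List.map_cons, List.cons.injEq] at h
      rw [typeWord_cons, List.flatten_cons, List.mem_append, ← ih f h.2, ← rowWith_ne v row x h.1]
      simp only [ne_eq, List.append_eq_nil_iff]
      tauto

/-- the tableaux of given shape and type -/
def Tab {A : Type*} (J B : Sentence A) : Set Filling := {f | IsCIT J f ∧ HasType J f B}

theorem le_maxEntry (f : Filling) (x : ℕ) (h : x ∈ f.flatten) : x ≤ maxEntry f := by
  unfold maxEntry
  generalize f.flatten = l at h
  induction l with
  | nil => simp at h
  | cons a l ih =>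
    rcases List.mem_cons.1 h with rfl | h
    · simp
    · have := ih h; simp only [List.foldr_cons]; omega

theorem filter_range'_le (M n : ℕ) (h : n ≤ M) :
    (List.range' 1 M).filter (fun v => decide (v ≤ n)) = List.range' 1 n := by
  obtain ⟨d, rfl⟩ := Nat.exists_eq_add_of_le h
  rw [← List.range'_append_1, List.filter_append, List.filter_eq_self.2, List.filter_eq_nil_iff.2,
    List.append_nil]
  · intro a ha; simp at ha; simp; omega
  · intro a ha; simp at ha; simp; omega

theorem mono_iff {A : Type*} (J K : Sentence A) (hK : IsSentence K) (f : Filling)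
    (hf : IsCIT J f) :
    monoOf J f = (K, List.range' 1 K.length) ↔ HasType J f K := by
  have hne := fun x => typeWord_ne J f x hf.1
  have er : (List.range (maxEntry f)).map (· + 1) = List.range' 1 (maxEntry f) := by
    rw [List.range'_eq_map_range]
    apply List.map_congr_left
    intro x _
    exact Nat.add_comm _ _
  simp only [monoOf, Prod.mk.injEq, er]
  constructor
  · rintro ⟨h1, h2⟩ v hv
    rw [h2] at h1
    by_cases hvK : v ≤ K.length
    · have : K.getD (v - 1) [] = ((List.range' 1 K.length).map (typeWord J f)).getD (v - 1) [] := by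
        rw [h1]
      rw [this, List.getD_eq_getElem _ _ (by simp; omega)]
      simp
      congr 1; omega
    · rw [List.getD_eq_default _ _ (by omega)]
      by_contra hc
      have h3 := le_maxEntry f v ((hne v).1 hc)
      have : v ∈ List.range' 1 K.length := by
        rw [← h2, List.mem_filter]
        refine ⟨by simp; omega, by simpa using hc⟩
      simp at this; omega
  · intro h
    have hv : ∀ v, 1 ≤ v → (typeWord J f v ≠ [] ↔ v ≤ K.length) := by
      intro v hv
      rw [h v hv]
      by_cases hvK : v ≤ K.length
      · rw [List.getD_eq_getElem _ _ (by omega)]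
        simp only [hvK, iff_true]
        exact hK _ (List.getElem_mem _)
      · rw [List.getD_eq_default _ _ (by omega)]
        simp [hvK]
    have h2 : (List.range' 1 (maxEntry f)).filter (fun v => !(typeWord J f v).isEmpty) =
        List.range' 1 K.length := by
      rw [← filter_range'_le (maxEntry f) K.length]
      · apply List.filter_congr
        intro x hx
        have := hv x (by simp at hx; omega)
        rw [Bool.eq_iff_iff]
        simpa using this
      · by_cases h0 : K.length = 0
        · omega
        · exact le_maxEntry f _ ((hne _).1 ((hv _ (by omega)).2 le_rfl))
    refine ⟨?_, h2⟩
    rw [h2]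
    apply List.ext_getElem
    · simp
    · intro i h3 h4
      simp only [List.getElem_map, List.getElem_range']
      rw [h _ (by omega)]
      simp only [one_mul, Nat.add_sub_cancel_left]
      rw [List.getD_eq_getElem _ _ h4]

theorem dualImm_eq {A : Type*} (J K : Sentence A) (hK : IsSentence K) :
    dualImm J (K, List.range' 1 K.length) = ((Tab J K).ncard : ℚ) := by
  unfold dualImm Tab
  congr 2
  ext f
  simp only [Set.mem_ofPred_eq]
  constructor
  · rintro ⟨h1, h2⟩; exact ⟨h1, (mono_iff J K hK f h1).1 h2⟩
  · rintro ⟨h1, h2⟩; exact ⟨h1, (mono_iff J K hK f h1).2 h2⟩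

/-- shift all entries by one -/
def shiftF (f : Filling) : Filling := f.map (List.map (· + 1))

theorem shiftF_inj : Function.Injective shiftF := by
  apply List.map_injective_iff.2
  apply List.map_injective_iff.2
  intro a b h; simpa using h

theorem rowWith_shift {A : Type*} (w : List A) (row : List ℕ) (x : ℕ) :
    rowWith w (row.map (· + 1)) (x + 1) = rowWith w row x := by
  induction w generalizing row with
  | nil => simp [rowWith_nil]
  | cons a w ih =>
    cases row with
    | nil => simp [rowWith_nil_right]
    | cons b row => simp [rowWith_cons, ih]

theorem typeWord_shift {A : Type*} (J : Sentence A) (f : Filling) (x : ℕ) :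
    typeWord J (shiftF f) (x + 1) = typeWord J f x := by
  induction J generalizing f with
  | nil => simp [typeWord_nil]
  | cons v J ih =>
    cases f with
    | nil => simp [typeWord_nil_right, shiftF]
    | cons row f =>
      have := ih f
      simp only [shiftF, List.map_cons] at this ⊢
      rw [typeWord_cons, typeWord_cons, this, rowWith_shift]

theorem heads_nil (f : Filling) :
    List.filterMap List.head? ([] :: f) = f.filterMap List.head? := rfl

theorem heads_cons (b : ℕ) (row : List ℕ) (f : Filling) :
    List.filterMap List.head? ((b :: row) :: f) = b :: f.filterMap List.head? := rfl

theorem heads_shift (f : Filling) :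
    (shiftF f).filterMap List.head? = (f.filterMap List.head?).map (· + 1) := by
  induction f with
  | nil => rfl
  | cons row f ih =>
    cases row with
    | nil =>
      simp only [shiftF, List.map_cons, List.map_nil] at ih ⊢
      rw [heads_nil, heads_nil, ih]
    | cons b row =>
      simp only [shiftF, List.map_cons] at ih ⊢
      rw [heads_cons, heads_cons, ih, List.map_cons]

theorem isCIT_shift {A : Type*} (J : Sentence A) (f : Filling) :
    IsCIT J (shiftF f) ∧ 1 ∉ (shiftF f).flatten ↔ IsCIT J f := by
  have e1 : (shiftF f).map List.length = f.map List.length := by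
    simp [shiftF, Function.comp_def]
  have e4 : (shiftF f).flatten = f.flatten.map (· + 1) := by simp [shiftF]
  have e2 : (∀ row ∈ shiftF f, row.IsChain (· ≤ ·)) ↔ (∀ row ∈ f, row.IsChain (· ≤ ·)) := by
    simp [shiftF, List.isChain_map]
  have e3 : ((f.filterMap List.head?).map (· + 1)).IsChain (· < ·) ↔
      (f.filterMap List.head?).IsChain (· < ·) := by
    simp [List.isChain_map]
  have e5 : ((∀ x ∈ f.flatten.map (· + 1), 1 ≤ x) ∧ 1 ∉ f.flatten.map (· + 1)) ↔
      ∀ x ∈ f.flatten, 1 ≤ x := by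
    constructor
    · rintro ⟨_, h⟩ x hx
      by_contra hc
      apply h
      simp only [List.mem_map]
      exact ⟨x, hx, by omega⟩
    · intro h
      constructor
      · intro x hx
        simp only [List.mem_map] at hx
        obtain ⟨y, _, rfl⟩ := hx; omega
      · intro hx
        simp only [List.mem_map] at hx
        obtain ⟨y, hy, h'⟩ := hx
        have := h y hy; omega
  unfold IsCIT
  rw [e1, heads_shift, e4, ← e5]
  unfold List.Chain'
  rw [e2, e3]
  tauto

theorem exists_shift (f : Filling) (h0 : ∀ x ∈ f.flatten, 1 ≤ x) : ∃ g, shiftF g = f := by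
  refine ⟨f.map (List.map (· - 1)), ?_⟩
  simp only [shiftF, List.map_map]
  conv_rhs => rw [← List.map_id f]
  apply List.map_congr_left
  intro row hrow
  simp only [Function.comp_apply, List.map_map, id]
  conv_rhs => rw [← List.map_id row]
  apply List.map_congr_left
  intro x hx
  have := h0 x (List.mem_flatten.2 ⟨row, hrow, hx⟩)
  simp only [Function.comp_apply, id]; omega

theorem Tab_shift {A : Type*} (J B : Sentence A) : Tab J ([] :: B) = shiftF '' Tab J B := by
  ext f
  constructor
  · rintro ⟨h1, h2⟩
    obtain ⟨g, rfl⟩ := exists_shift f h1.2.2.2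
    have hn : 1 ∉ (shiftF g).flatten := by
      rw [← typeWord_ne J _ 1 h1.1, h2 1 le_rfl]; simp
    refine ⟨g, ⟨(isCIT_shift J g).1 ⟨h1, hn⟩, ?_⟩, rfl⟩
    intro v hv
    rw [← typeWord_shift, h2 _ (by omega)]
    obtain ⟨u, rfl⟩ := Nat.exists_eq_add_of_le' hv
    simp
  · rintro ⟨g, ⟨h1, h2⟩, rfl⟩
    have h3 := (isCIT_shift J g).2 h1
    refine ⟨h3.1, ?_⟩
    intro v hv
    by_cases h : v = 1
    · subst h
      have := h3.2
      rw [← typeWord_ne J _ 1 h3.1.1] at this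
      simpa using this
    · obtain ⟨u, rfl⟩ := Nat.exists_eq_add_of_le' hv
      rw [typeWord_shift, h2 u (by omega)]
      obtain ⟨u, rfl⟩ := Nat.exists_eq_add_of_le' (show 1 ≤ u by omega)
      simp

theorem Tab_shift_ncard {A : Type*} (J B : Sentence A) :
    (Tab J ([] :: B)).ncard = (Tab J B).ncard := by
  rw [Tab_shift, Set.ncard_image_of_injective _ shiftF_inj]

theorem Tab_nil {A : Type*} (B : Sentence A) :
    Tab [] B = if flattenWS B = [] then {[]} else ∅ := by
  ext f
  have hfl : flattenWS B = [] ↔ ∀ v, 1 ≤ v → [] = B.getD (v - 1) [] := by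
    simp only [flattenWS, List.filter_eq_nil_iff]
    constructor
    · intro h v hv
      by_cases hl : v - 1 < B.length
      · rw [List.getD_eq_getElem _ _ hl]
        have := h _ (List.getElem_mem hl)
        simp only [Bool.not_eq_eq_eq_not, Bool.not_true, Bool.not_eq_false,
          List.isEmpty_iff] at this
        exact this.symm
      · rw [List.getD_eq_default _ _ (by omega)]
    · intro h w hw
      obtain ⟨i, hi, rfl⟩ := List.getElem_of_mem hw
      have := h (i + 1) (by omega)
      rw [Nat.add_sub_cancel, List.getD_eq_getElem _ _ hi] at this
      simp [← this]
  constructor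
  · rintro ⟨h1, h2⟩
    have : f = [] := by simpa using h1.1
    have h3 : flattenWS B = [] := hfl.2 (fun v hv => by rw [← h2 v hv, typeWord_nil])
    simp [h3, this]
  · intro h
    split_ifs at h with h3
    · have : f = [] := by simpa using h
      subst this
      refine ⟨by simp [IsCIT, List.Chain'], ?_⟩
      intro v hv
      rw [typeWord_nil]
      exact hfl.1 h3 v hv
    · simp at h

theorem Tab_cons_nil {A : Type*} (v : List A) (J : Sentence A) (hv : v ≠ []) :
    Tab (v :: J) [] = ∅ := by
  ext f
  simp only [Set.mem_empty_iff_false, iff_false]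
  rintro ⟨h1, h2⟩
  cases f with
  | nil => have := h1.1; simp at this
  | cons row f =>
    have hl := h1.1
    simp only [List.map_cons, List.cons.injEq] at hl
    have : row ≠ [] := by
      rintro rfl
      have := hl.1; simp at this; exact hv (List.eq_nil_of_length_eq_zero this.symm)
    obtain ⟨b, row, rfl⟩ := List.exists_cons_of_ne_nil this
    have hb := h1.2.2.2 b (by simp)
    exact (typeWord_ne _ _ b h1.1).2 (by simp) (by rw [h2 b hb]; simp)

end ColoredImm

namespace ColoredImm

/-- the weakly increasing row with the lengths of the words of `s` as content -/
def rowOfS {A : Type*} : ℕ → Sentence A → List ℕ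
  | _, [] => []
  | n, w :: s => List.replicate w.length n ++ rowOfS (n + 1) s

theorem rowWith_append {A : Type*} (w w' : List A) (r r' : List ℕ) (x : ℕ)
    (h : w.length = r.length) :
    rowWith (w ++ w') (r ++ r') x = rowWith w r x ++ rowWith w' r' x := by
  simp [rowWith, List.zip_append h]

theorem rowWith_replicate {A : Type*} (w : List A) (n x : ℕ) :
    rowWith w (List.replicate w.length n) x = if n = x then w else [] := by
  induction w with
  | nil => simp [rowWith_nil]
  | cons a w ih =>
    rw [List.length_cons, List.replicate_succ, rowWith_cons, ih]
    split_ifs <;> rfl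

theorem rowWith_rowOfS {A : Type*} (n : ℕ) (s : Sentence A) (x : ℕ) :
    rowWith s.flatten (rowOfS n s) x = if n ≤ x then s.getD (x - n) [] else [] := by
  induction s generalizing n with
  | nil => simp [rowWith_nil]
  | cons w s ih =>
    rw [List.flatten_cons, rowOfS, rowWith_append _ _ _ _ _ (by simp), rowWith_replicate, ih]
    by_cases h1 : n = x
    · subst h1; simp
    · by_cases h2 : n ≤ x
      · have : x - n = (x - (n + 1)) + 1 := by omega
        rw [if_neg h1, if_pos (by omega), if_pos h2, this]; simp
      · rw [if_neg h1, if_neg (by omega), if_neg h2]; rfl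

theorem rowOfS_length {A : Type*} (n : ℕ) (s : Sentence A) :
    (rowOfS n s).length = s.flatten.length := by
  induction s generalizing n with
  | nil => rfl
  | cons w s ih => simp [rowOfS, ih]

theorem rowOfS_ge {A : Type*} (n : ℕ) (s : Sentence A) : ∀ x ∈ rowOfS n s, n ≤ x := by
  induction s generalizing n with
  | nil => simp [rowOfS]
  | cons w s ih =>
    intro x hx
    rw [rowOfS, List.mem_append] at hx
    rcases hx with hx | hx
    · exact (List.eq_of_mem_replicate hx).ge
    · have := ih _ x hx; omega

theorem rowOfS_sorted {A : Type*} (n : ℕ) (s : Sentence A) :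
    (rowOfS n s).Pairwise (· ≤ ·) := by
  induction s generalizing n with
  | nil => simp [rowOfS]
  | cons w s ih =>
    rw [rowOfS, List.pairwise_append]
    refine ⟨List.pairwise_replicate.2 (Or.inr le_rfl), ih _, ?_⟩
    intro a ha b hb
    have := rowOfS_ge _ _ b hb
    have := List.eq_of_mem_replicate ha
    omega

theorem sorted_peel (n : ℕ) (row : List ℕ) (h : row.Pairwise (· ≤ ·)) (h2 : ∀ x ∈ row, n ≤ x) :
    ∃ k row', row = List.replicate k n ++ row' ∧ ∀ x ∈ row', n + 1 ≤ x := by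
  induction row with
  | nil => exact ⟨0, [], rfl, by simp⟩
  | cons b row ih =>
    rw [List.pairwise_cons] at h
    by_cases hb : b = n
    · subst hb
      obtain ⟨k, row', e, hr⟩ := ih h.2 (fun x hx => h2 x (by simp [hx]))
      exact ⟨k + 1, row', by rw [e, List.replicate_succ, List.cons_append], hr⟩
    · refine ⟨0, b :: row, rfl, ?_⟩
      have hb2 := h2 b (by simp)
      intro x hx
      rcases List.mem_cons.1 hx with rfl | hx
      · omega
      · have := h.1 x hx; omega

theorem row_decomp {A : Type*} (m n : ℕ) (v : List A) (row : List ℕ) (hl : row.length = v.length)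
    (h : row.Pairwise (· ≤ ·)) (h2 : ∀ x ∈ row, n ≤ x ∧ x < n + m) :
    ((List.range m).map (fun i => rowWith v row (n + i))).flatten = v ∧
    rowOfS n ((List.range m).map (fun i => rowWith v row (n + i))) = row := by
  induction m generalizing n v row with
  | zero =>
    have : row = [] := by
      apply List.eq_nil_iff_forall_not_mem.2
      intro x hx; have := h2 x hx; omega
    subst this
    have : v = [] := List.eq_nil_of_length_eq_zero (by simpa using hl.symm)
    subst this; simp [rowOfS]
  | succ m ih =>
    obtain ⟨k, row', rfl, hr⟩ := sorted_peel n row h (fun x hx => (h2 x hx).1)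
    have hl' : k + row'.length = v.length := by simpa using hl
    obtain ⟨a, b, rfl, ha⟩ : ∃ a b, v = a ++ b ∧ a.length = k :=
      ⟨v.take k, v.drop k, by simp, by simp; omega⟩
    subst ha
    have hb : row'.length = b.length := by simpa using hl'
    have e0 : rowWith (a ++ b) (List.replicate a.length n ++ row') n = a := by
      rw [rowWith_append _ _ _ _ _ (by simp), rowWith_replicate, if_pos rfl]
      have : rowWith b row' n = [] := by
        by_contra hc
        have := hr n ((rowWith_ne b row' n hb).1 hc)
        omega
      simp [this]
    have e1 : ∀ i, rowWith (a ++ b) (List.replicate a.length n ++ row') (n + (i + 1)) =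
        rowWith b row' (n + 1 + i) := by
      intro i
      rw [rowWith_append _ _ _ _ _ (by simp), rowWith_replicate, if_neg (by omega),
        List.nil_append]
      congr 1; omega
    obtain ⟨i1, i2⟩ := ih (n + 1) b row' hb (List.pairwise_append.1 h).2.1 (by
      intro x hx
      have := hr x hx
      have := h2 x (by simp [hx])
      omega)
    rw [List.range_succ_eq_map, List.map_cons, List.map_map]
    simp only [Function.comp_def, Nat.succ_eq_add_one, e1, Nat.add_zero, e0]
    refine ⟨by rw [List.flatten_cons, i1], by rw [rowOfS, i2]⟩

theorem mem_splits_cons {A : Type*} (w : List A) (m : Sentence A) (x : Sentence A × Sentence A) :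
    x ∈ splitsOf (w :: m) ↔ ∃ a b, a ++ b = w ∧ ∃ y ∈ splitsOf m, x = (a :: y.1, b :: y.2) := by
  simp only [splitsOf, List.mem_flatten, List.mem_map]
  constructor
  · rintro ⟨l, ⟨y, hy, rfl⟩, hx⟩
    simp only [List.mem_map] at hx
    obtain ⟨t, _, rfl⟩ := hx
    exact ⟨w.take t, w.drop t, by simp, y, hy, rfl⟩
  · rintro ⟨a, b, rfl, y, hy, rfl⟩
    refine ⟨_, ⟨y, hy, rfl⟩, ?_⟩
    simp only [List.mem_map, List.mem_range]
    exact ⟨a.length, by simp, by simp⟩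

theorem mem_splits {A : Type*} (m : Sentence A) (x : Sentence A × Sentence A) :
    x ∈ splitsOf m ↔ x.1.length = m.length ∧ x.2.length = m.length ∧
      ∀ i, x.1.getD i [] ++ x.2.getD i [] = m.getD i [] := by
  induction m generalizing x with
  | nil =>
    obtain ⟨p, s⟩ := x
    simp only [splitsOf, List.mem_singleton, Prod.mk.injEq, List.length_nil,
      List.length_eq_zero_iff]
    constructor
    · rintro ⟨rfl, rfl⟩; simp
    · rintro ⟨rfl, rfl, _⟩; simp
  | cons w m ih =>
    rw [mem_splits_cons]
    constructor
    · rintro ⟨a, b, rfl, y, hy, rfl⟩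
      obtain ⟨h1, h2, h3⟩ := (ih y).1 hy
      refine ⟨by simp [h1], by simp [h2], ?_⟩
      intro i
      cases i with
      | zero => simp
      | succ i => simpa using h3 i
    · obtain ⟨p, s⟩ := x
      rintro ⟨h1, h2, h3⟩
      cases p with
      | nil => simp at h1
      | cons a p =>
        cases s with
        | nil => simp at h2
        | cons b s =>
          refine ⟨a, b, by simpa using h3 0, (p, s), (ih _).2 ⟨by simpa using h1, by simpa using h2,
            fun i => by simpa using h3 (i + 1)⟩, rfl⟩

theorem splits_nodup {A : Type*} (m : Sentence A) : (splitsOf m).Nodup := by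
  induction m with
  | nil => simp [splitsOf]
  | cons w m ih =>
    rw [splitsOf, ← List.flatMap_def, List.nodup_flatMap]
    constructor
    · intro x _
      apply List.Nodup.map_on _ List.nodup_range
      intro a ha b hb h
      have := congrArg List.length (List.cons.inj (Prod.mk.inj h).1).1
      simp at this ha hb
      omega
    · apply List.Nodup.pairwise_of_forall_ne ih
      intro a ha b hb hab Q h1 h2
      simp only [List.mem_map] at h1 h2
      obtain ⟨t1, _, rfl⟩ := h1
      obtain ⟨t2, _, h3⟩ := h2
      apply hab
      have e1 := (List.cons.inj (Prod.mk.inj h3).1).2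
      have e2 := (List.cons.inj (Prod.mk.inj h3).2).2
      exact (Prod.ext e1 e2).symm

theorem splits_inj {A : Type*} (m : Sentence A) (x y : Sentence A × Sentence A)
    (hx : x ∈ splitsOf m) (hy : y ∈ splitsOf m) (h : x.2 = y.2) : x = y := by
  obtain ⟨a1, a2, a3⟩ := (mem_splits m x).1 hx
  obtain ⟨b1, b2, b3⟩ := (mem_splits m y).1 hy
  refine Prod.ext ?_ h
  apply List.ext_getElem (by omega)
  intro i h1 h2
  have := (a3 i).trans (b3 i).symm
  rw [h] at this
  have := List.append_cancel_right this
  rwa [List.getD_eq_getElem _ _ h1, List.getD_eq_getElem _ _ h2] at this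

/-- one piece of the decomposition of the set of tableaux -/
def Piece {A : Type*} (v w : List A) (J : Sentence A) (x : Sentence A × Sentence A) :
    Set Filling :=
  {f | v = w ++ x.2.flatten ∧ ∃ f' ∈ Tab J ([] :: x.1), f = rowOfS 1 (w :: x.2) :: f'}

theorem no_one {A : Type*} (J : Sentence A) (f : Filling) (hf : IsCIT J f)
    (h : ∀ x ∈ f.filterMap List.head?, 1 < x) : 1 ∉ f.flatten := by
  intro h1
  obtain ⟨row, hrow, h1⟩ := List.mem_flatten.1 h1
  have hs : row.Pairwise (· ≤ ·) := List.isChain_iff_pairwise.1 (hf.2.1 row hrow)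
  cases row with
  | nil => simp at h1
  | cons b row =>
    have hb : 1 < b := h b (List.mem_filterMap.2 ⟨_, hrow, rfl⟩)
    rw [List.pairwise_cons] at hs
    rcases List.mem_cons.1 h1 with h1 | h1
    · omega
    · have := hs.1 1 h1; omega

theorem Tab_cons {A : Type*} (v w : List A) (J B : Sentence A) (hv : v ≠ []) (hw : w ≠ []) :
    Tab (v :: J) (w :: B) = {f | ∃ x ∈ splitsOf B, f ∈ Piece v w J x} := by
  ext f
  constructor
  · rintro ⟨h1, h2⟩
    cases f with
    | nil => have := h1.1; simp at this
    | cons row f =>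
      obtain ⟨c1, c2, c3, c4⟩ := id h1
      simp only [List.map_cons, List.cons.injEq] at c1
      have hsort : row.Pairwise (· ≤ ·) := List.isChain_iff_pairwise.1 (c2 row (by simp))
      have hrne : row ≠ [] := by
        rintro rfl
        have := c1.1; simp at this; exact hv (List.eq_nil_of_length_eq_zero this.symm)
      have hbound : ∀ x ∈ row, 1 ≤ x ∧ x < 1 + (B.length + 1) := by
        intro x hx
        have hx1 := c4 x (by simp [hx])
        refine ⟨hx1, ?_⟩
        by_contra hc
        refine (typeWord_ne _ _ x h1.1).2 (by simp [hx]) ?_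
        rw [h2 x hx1, List.getD_eq_default _ _ (by simp; omega)]
      obtain ⟨d1, d2⟩ := row_decomp (B.length + 1) 1 v row c1.1 hsort hbound
      obtain ⟨b, row0, hrow⟩ := List.exists_cons_of_ne_nil hrne
      have hch : (b :: f.filterMap List.head?).Pairwise (· < ·) := by
        rw [← heads_cons b row0, ← hrow]
        exact List.isChain_iff_pairwise.1 c3
      rw [List.pairwise_cons] at hch
      have hb1 : 1 ≤ b := c4 b (by simp [hrow])
      have hf : IsCIT J f := ⟨c1.2, fun r hr => c2 r (by simp [hr]),
        List.isChain_iff_pairwise.2 hch.2, fun x hx => c4 x (by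
          rw [List.flatten_cons]; exact List.mem_append_right _ hx)⟩
      have hno := no_one J f hf (fun x hx => lt_of_le_of_lt hb1 (hch.1 x hx))
      have ht1 : typeWord J f 1 = [] := by
        rw [← typeWord_ne J f 1 hf.1] at hno; simpa using hno
      have hw1 : rowWith v row 1 = w := by
        have := h2 1 le_rfl
        rw [typeWord_cons, ht1] at this
        simpa using this
      have hi : ∀ i, typeWord J f (i + 2) ++ rowWith v row (i + 2) = B.getD i [] := by
        intro i
        have := h2 (i + 2) (by omega)
        rw [typeWord_cons] at this
        rw [this]; simp
      have er : (List.range (B.length + 1)).map (fun i => rowWith v row (1 + i)) =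
          w :: (List.range B.length).map (fun i => rowWith v row (i + 2)) := by
        rw [List.range_succ_eq_map, List.map_cons, List.map_map]
        congr 1
        apply List.map_congr_left
        intro i _
        simp only [Function.comp_apply]
        congr 1
        omega
      rw [er] at d1 d2
      have gd : ∀ (g : ℕ → List A) (i : ℕ), i < B.length →
          ((List.range B.length).map g).getD i [] = g i := by
        intro g i h
        rw [List.getD_eq_getElem _ _ (by simpa using h)]; simp
      have gd' : ∀ (g : ℕ → List A) (i : ℕ), ¬ i < B.length →
          ((List.range B.length).map g).getD i [] = [] := by
        intro g i h
        rw [List.getD_eq_default _ _ (by simpa using h)]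
      refine ⟨((List.range B.length).map (fun i => typeWord J f (i + 2)),
        (List.range B.length).map (fun i => rowWith v row (i + 2))), ?_, ?_, f, ⟨hf, ?_⟩, ?_⟩
      · rw [mem_splits]
        refine ⟨by simp, by simp, ?_⟩
        intro i
        by_cases hiB : i < B.length
        · rw [gd _ _ hiB, gd _ _ hiB, hi]
        · rw [gd' _ _ hiB, gd' _ _ hiB, List.getD_eq_default _ _ (by omega)]; rfl
      · exact d1.symm
      · intro x hx
        by_cases hx1 : x = 1
        · subst hx1; simpa using ht1
        · obtain ⟨i, rfl⟩ := Nat.exists_eq_add_of_le' (show 2 ≤ x by omega)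
          have : i + 2 - 1 = i + 1 := by omega
          rw [this, List.getD_cons_succ]
          by_cases hiB : i < B.length
          · rw [gd _ _ hiB]
          · rw [gd' _ _ hiB]
            have := hi i
            rw [List.getD_eq_default _ _ (by omega)] at this
            exact (List.append_eq_nil_iff.1 this).1
      · rw [d2]
  · rintro ⟨⟨p, s⟩, hx, e, f', ⟨h1, h2⟩, rfl⟩
    obtain ⟨l1, l2, l3⟩ := (mem_splits B _).1 hx
    simp only at e l1 l2 l3 h2
    have ev : v = (w :: s).flatten := by simpa using e
    have hno : 1 ∉ f'.flatten := by
      rw [← typeWord_ne J f' 1 h1.1, h2 1 le_rfl]; simp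
    obtain ⟨a, w', rfl⟩ := List.exists_cons_of_ne_nil hw
    obtain ⟨row0, hrow⟩ : ∃ row0, rowOfS 1 ((a :: w') :: s) = 1 :: row0 :=
      ⟨_, by rw [rowOfS, List.length_cons, List.replicate_succ, List.cons_append]⟩
    obtain ⟨c1, c2, c3, c4⟩ := id h1
    refine ⟨⟨?_, ?_, ?_, ?_⟩, ?_⟩
    · simp only [List.map_cons, c1, rowOfS_length, ← ev]
    · intro row hr
      rcases List.mem_cons.1 hr with rfl | hr
      · exact List.isChain_iff_pairwise.2 (rowOfS_sorted _ _)
      · exact c2 row hr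
    · simp only
      rw [hrow, heads_cons]
      apply List.isChain_iff_pairwise.2
      rw [List.pairwise_cons]
      refine ⟨?_, List.isChain_iff_pairwise.1 c3⟩
      intro x hx
      obtain ⟨row, hr, hx⟩ := List.mem_filterMap.1 hx
      have hx' : x ∈ f'.flatten := List.mem_flatten.2 ⟨row, hr, List.mem_of_mem_head? hx⟩
      have := c4 x hx'
      have : x ≠ 1 := by rintro rfl; exact hno hx'
      omega
    · intro x hx
      rw [List.flatten_cons, List.mem_append] at hx
      rcases hx with hx | hx
      · exact rowOfS_ge _ _ x hx
      · exact c4 x hx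
    · intro x hx
      rw [typeWord_cons, h2 x hx]
      simp only
      rw [ev, rowWith_rowOfS, if_pos hx]
      obtain ⟨i, rfl⟩ := Nat.exists_eq_add_of_le' hx
      cases i with
      | zero => simp
      | succ i => simpa using l3 i

theorem ncard_list {X Y : Type*} (l : List X) (g : X → Set Y) (hfin : ∀ x ∈ l, (g x).Finite)
    (hd : l.Pairwise (fun x y => Disjoint (g x) (g y))) :
    {f | ∃ x ∈ l, f ∈ g x}.Finite ∧
    {f | ∃ x ∈ l, f ∈ g x}.ncard = (l.map fun x => (g x).ncard).sum := by
  induction l with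
  | nil => simp
  | cons x l ih =>
    rw [List.pairwise_cons] at hd
    obtain ⟨i1, i2⟩ := ih (fun y hy => hfin y (by simp [hy])) hd.2
    have hx := hfin x (by simp)
    have e : {f | ∃ y ∈ x :: l, f ∈ g y} = g x ∪ {f | ∃ x ∈ l, f ∈ g x} := by
      ext f; simp
    rw [e]
    refine ⟨hx.union i1, ?_⟩
    rw [Set.ncard_union_eq _ hx i1, i2, List.map_cons, List.sum_cons]
    rw [Set.disjoint_left]
    rintro f hf ⟨y, hy, hfy⟩
    exact Set.disjoint_left.1 (hd.1 y hy) hf hfy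

open Classical in
theorem piece_ncard {A : Type*} (v w : List A) (J : Sentence A) (x : Sentence A × Sentence A) :
    (Piece v w J x).ncard = if w ++ x.2.flatten = v then (Tab J x.1).ncard else 0 := by
  by_cases h : w ++ x.2.flatten = v
  · rw [if_pos h, ← Tab_shift_ncard,
      ← Set.ncard_image_of_injective (f := fun f' => rowOfS 1 (w :: x.2) :: f') (Tab J ([] :: x.1))
        (fun a b hab => (List.cons.inj hab).2)]
    congr 1
    ext f
    simp only [Piece, Set.mem_ofPred_eq, h, Set.mem_image, true_and, eq_comm]
  · rw [if_neg h]
    have : Piece v w J x = ∅ := by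
      ext f
      simp only [Piece, Set.mem_ofPred_eq, Set.mem_empty_iff_false, iff_false]
      rintro ⟨h1, _⟩; exact h h1.symm
    simp [this]

theorem piece_finite {A : Type*} (v w : List A) (J : Sentence A) (x : Sentence A × Sentence A)
    (h : (Tab J x.1).Finite) : (Piece v w J x).Finite := by
  have h1 : (Tab J ([] :: x.1)).Finite := by rw [Tab_shift]; exact h.image _
  refine (h1.image (fun f' => rowOfS 1 (w :: x.2) :: f')).subset ?_
  rintro f ⟨_, f', hf', rfl⟩
  exact ⟨f', hf', rfl⟩

theorem piece_disj {A : Type*} (v w : List A) (J B : Sentence A) :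
    (splitsOf B).Pairwise (fun x y => Disjoint (Piece v w J x) (Piece v w J y)) := by
  apply List.Nodup.pairwise_of_forall_ne (splits_nodup B)
  intro x hx y hy hxy
  rw [Set.disjoint_left]
  rintro f ⟨e1, f1, _, rfl⟩ ⟨e2, f2, _, h⟩
  apply hxy
  apply splits_inj B x y hx hy
  have hr := (List.cons.inj h).1
  have k1 := fun z => rowWith_rowOfS 1 (w :: x.2) z
  have k2 := fun z => rowWith_rowOfS 1 (w :: y.2) z
  obtain ⟨-, a2, -⟩ := (mem_splits B x).1 hx
  obtain ⟨-, b2, -⟩ := (mem_splits B y).1 hy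
  apply List.ext_getElem (by omega)
  intro i h1 h2
  have q1 := k1 (i + 2)
  have q2 := k2 (i + 2)
  rw [List.flatten_cons, ← e1, hr] at q1
  rw [List.flatten_cons, ← e2, q1, if_pos (by omega), if_pos (by omega)] at q2
  have : i + 2 - 1 = i + 1 := by omega
  rw [this, List.getD_cons_succ, List.getD_cons_succ, List.getD_eq_getElem _ _ h1,
    List.getD_eq_getElem _ _ h2] at q2
  exact q2

theorem Tab_finite {A : Type*} (n : ℕ) (J B : Sentence A) (hJ : IsSentence J) (hn : B.length = n) :
    (Tab J B).Finite := by
  induction n generalizing J B with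
  | zero =>
    have : B = [] := List.eq_nil_of_length_eq_zero hn
    subst this
    cases J with
    | nil => rw [Tab_nil]; split_ifs <;> simp
    | cons v J => rw [Tab_cons_nil v J (sent_cons.1 hJ).1]; simp
  | succ n ih =>
    cases J with
    | nil => rw [Tab_nil]; split_ifs <;> simp
    | cons v J =>
      cases B with
      | nil => simp at hn
      | cons w B =>
        have hB : B.length = n := by simpa using hn
        by_cases hw : w = []
        · subst hw
          rw [Tab_shift]
          exact (ih _ _ hJ hB).image _
        · obtain ⟨hv, hJ'⟩ := sent_cons.1 hJ
          rw [Tab_cons v w J B hv hw]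
          refine (ncard_list _ _ ?_ (piece_disj v w J B)).1
          intro x hx
          apply piece_finite
          exact ih _ _ hJ' (by rw [(splits_length B x hx).1, hB])

open Classical in
theorem Tab_ncard_cons {A : Type*} (v w : List A) (J B : Sentence A) (hJ : IsSentence (v :: J))
    (hw : w ≠ []) :
    ((Tab (v :: J) (w :: B)).ncard : ℚ) =
      Sp B (fun p s => if w ++ s.flatten = v then ((Tab J p).ncard : ℚ) else 0) := by
  obtain ⟨hv, hJ'⟩ := sent_cons.1 hJ
  rw [Tab_cons v w J B hv hw, (ncard_list _ _ ?_ (piece_disj v w J B)).2]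
  · rw [Sp, Nat.cast_list_sum, List.map_map]
    congr 1
    apply List.map_congr_left
    intro x _
    simp only [Function.comp_apply, piece_ncard]
    split_ifs <;> simp
  · intro x hx
    exact piece_finite _ _ _ _ (Tab_finite _ _ _ hJ' rfl)

theorem Sp_congr {A : Type*} (m : Sentence A) (f g : Sentence A → Sentence A → ℚ)
    (h : ∀ p s, p.length = m.length → f p s = g p s) : Sp m f = Sp m g := by
  unfold Sp
  congr 1
  apply List.map_congr_left
  intro x hx
  exact h _ _ (splits_length m x hx).1

theorem Tab_ncard_flat {A : Type*} (n : ℕ) (J B : Sentence A) (hJ : IsSentence J)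
    (hn : B.length ≤ n) : (Tab J (flattenWS B)).ncard = (Tab J B).ncard := by
  classical
  induction n generalizing J B with
  | zero =>
    have : B = [] := List.eq_nil_of_length_eq_zero (by omega)
    subst this; rfl
  | succ n ih =>
    cases B with
    | nil => rfl
    | cons w B =>
      have hB : B.length ≤ n := by simpa using hn
      by_cases hw : w = []
      · subst hw
        rw [flat_nil_cons, Tab_shift_ncard, ih J B hJ hB]
      · cases J with
        | nil => rw [Tab_nil, Tab_nil, flat_flat]
        | cons v J =>
          obtain ⟨hv, hJ'⟩ := sent_cons.1 hJ
          have : ((Tab (v :: J) (flattenWS (w :: B))).ncard : ℚ) =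
              ((Tab (v :: J) (w :: B)).ncard : ℚ) := by
            rw [flat_cons hw, Tab_ncard_cons v w J _ hJ hw, Tab_ncard_cons v w J _ hJ hw]
            have hle : (flattenWS B).length ≤ n := le_trans (List.length_filter_le _ _) hB
            have e1 := Sp_flat B (fun p r => if w ++ r = v then ((Tab J p).ncard : ℚ) else 0)
            rw [Sp_congr B (fun p s => if w ++ s.flatten = v then ((Tab J p).ncard : ℚ) else 0)
              (fun p s => if w ++ s.flatten = v then ((Tab J (flattenWS p)).ncard : ℚ) else 0),
              ← e1]
            · apply Sp_congr
              intro p s hp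
              simp only [ih J p hJ' (by omega)]
            · intro p s hp
              simp only [ih J p hJ' (by omega)]
          exact_mod_cast this

end ColoredImm

namespace ColoredImm

theorem bernL_cons {A : Type*} (v : List A) (l : List (ℚ × Sentence A)) :
    ∀ c ∈ bernL v l, ∃ u K, c.2 = (v ++ u) :: K := by
  intro c hc
  simp only [bernL, List.mem_flatMap, List.mem_map] at hc
  obtain ⟨x, _, Q, _, rfl⟩ := hc
  exact ⟨_, _, rfl⟩

open Classical in
theorem ImmS_main {A : Type*} (I : Sentence A) (hI : IsSentence I) :
    ∃ l : List (ℚ × Sentence A), (∀ c ∈ l, IsSentence c.2) ∧ ImmS I = toN l ∧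
      ∀ J : Sentence A, IsSentence J →
        (l.map fun c => c.1 * ((Tab J c.2).ncard : ℚ)).sum = if I = J then 1 else 0 := by
  induction I with
  | nil =>
    refine ⟨[(1, [])], ?_, ?_, ?_⟩
    · intro c hc
      simp only [List.mem_singleton] at hc
      subst hc
      intro w hw
      simp at hw
    · simp [ImmS, toN]
    · intro J hJ
      cases J with
      | nil => simp [Tab_nil, flattenWS]
      | cons v J => simp [Tab_cons_nil v J (sent_cons.1 hJ).1]
  | cons v I ih =>
    obtain ⟨hv, hI'⟩ := sent_cons.1 hI
    obtain ⟨l, hl, hT, hP⟩ := ih hI'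
    refine ⟨bernL v l, bernL_sent v hv l, ?_, ?_⟩
    · rw [← Bern_toN v hv l hl, ← hT]
      rfl
    · intro J hJ
      cases J with
      | nil =>
        rw [if_neg (by simp)]
        apply List.sum_eq_zero
        intro x hx
        obtain ⟨c, hc, rfl⟩ := List.mem_map.1 hx
        obtain ⟨u, K, e⟩ := bernL_cons v l c hc
        rw [e, Tab_nil, flat_cons (by simp [hv])]
        simp
      | cons j J =>
        obtain ⟨hj, hJ'⟩ := sent_cons.1 hJ
        have := bernL_pair (fun K => ((Tab (j :: J) K).ncard : ℚ))
          (fun K => ((Tab J K).ncard : ℚ)) v j ?_ hv l hl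
        · rw [this, hP J hJ']
          by_cases h1 : v = j <;> by_cases h2 : I = J <;> simp [h1, h2]
        · intro w K hw _
          simp only [Tab_ncard_cons j w J K hJ hw, Tab_ncard_flat _ J _ hJ' le_rfl]

open Classical in
/-- The colored immaculate basis is dual to the colored dual immaculate
basis: `⟨𝔖_I, 𝔖*_J⟩ = δ_{I,J}` for all sentences `I` and `J`. -/
theorem statement14 {A : Type*} (I J : Sentence A) (hI : IsSentence I) (hJ : IsSentence J) :
    pairNQ (ImmS I) (dualImm J) = if I = J then 1 else 0 := by
  obtain ⟨l, hl, hT, hP⟩ := ImmS_main I hI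
  rw [hT, pair_toN l hl, ← hP J hJ]
  congr 1
  apply List.map_congr_left
  intro c hc
  rw [dualImm_eq J c.2 (hl c hc)]

end ColoredImm
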